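/- For $\alpha,\beta\in\mathbb R$ let $w_{\alpha,\beta}(x):=(1+x)^\alpha(1-x)^\beta$ and $\varphi(x):=(1-x^2)^{1/2}$; $\|\cdot\|_p$ is the $L^p$ norm on $[-1,1]$ (essential supremum if $p=\infty$), and $1/p:=0$ if $p=\infty$. Let $W_p^{\alpha,\beta}$ be the set of measurable $f:[-1,1]\to\mathbb R$ with $\|w_{\alpha,\beta}f\|_p<\infty$. Put $\Delta_h^k(f,x):=\sum_{i=0}^k\binom ki(-1)^{k-i}f(x-kh/2+ih)$ if $x\pm kh/2\in[-1,1]$ and $\Delta_h^k(f,x):=0$ otherwise; $\overrightarrow\Delta_h^k(f,x):=\Delta_h^k(f,x+kh/2)$, $\overleftarrow\Delta_h^k(f,x):=\Delta_h^k(f,x-kh/2)$. For a weight $w$ the weighted Ditzian–Totik modulus is $$\omega_\varphi^k(f,\delta)_{w,p}:=\sup_{0<h\le\delta}\|w\,\Delta_{h\varphi(\cdot)}^k(f,\cdot)\|_{L^p[-1+2k^2h^2,\,1-2k^2h^2]}+\sup_{0<h\le2k^2\delta^2}\|w\overrightarrow\Delta_h^k(f,\cdot)\|_{L^p[-1,\,-1+2k^2\delta^2]}+\sup_{0<h\le2k^2\delta^2}\|w\overleftarrow\Delta_h^k(f,\cdot)\|_{L^p[1-2k^2\delta^2,\,1]}.$$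 Let $M_+^k$ be the set of functions $f$ with $f=0$ on $(-1,0]$ all of whose $k$th divided differences $[x_0,\dots,x_k;f]$ over $k+1$ distinct points of $(-1,1)$ are nonnegative. Let $k\in\mathbb N=\{1,2,\dots\}$, $\beta\in\mathbb R$, $1\le p\le\infty$, and let $\delta_0$ satisfy $\delta_0\le\frac1{2k}$ and $\delta_0<\frac1{k\sqrt{k+1}}$ (for $k=1$ and $k=2$ the value $\delta_0=\frac1{2k}$ is allowed). Then there is a constant $c>0$, depending only on $k,p,\beta$ and $\delta_0$, such that for all $f\in M_+^k\cap W_p^{\beta,\beta}$ and all $0<\delta\le\delta_0$, $$\omega_\varphi^k(f,\delta)_{w_{\beta,\beta},1}\le c\,\|w_{\beta,\beta}f\|_p\,\Phi(\delta),$$ where $$\Phi(\delta):=\begin{cases}\delta^{2-2/p},&\text{if }k\ge3,\text{ or }k=2\text{ and }1\le p<\infty,\text{ or }k=1\text{ and }1\le p<2,\\ \delta^2|\ln\delta|,&\text{if }k=2\text{ and }p=\infty,\\ \delta\sqrt{|\ln\delta|},&\text{if }k=1\text{ and }p=2,\\ \delta,&\text{if }k=1\text{ and }2<p\le\infty.\end{cases}$$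 -/

import Mathlib

open MeasureTheory Set
open scoped ENNReal

noncomputable section

/-- The Jacobi weight `w_{α,β}(x) = (1+x)^α (1-x)^β`. -/
def jacobi (α β : ℝ) (x : ℝ) : ℝ := (1 + x) ^ α * (1 - x) ^ β

/-- `φ(x) = √(1-x²)`. -/
def phiW (x : ℝ) : ℝ := Real.sqrt (1 - x ^ 2)

/-- The `L^p` norm of `g` on the interval `[a,b]` (essential sup when `p = ∞`). -/
def LpOn (g : ℝ → ℝ) (p : ℝ≥0∞) (a b : ℝ) : ℝ≥0∞ :=
  eLpNorm g p (volume.restrict (Icc a b))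

/-- The `k`-th symmetric difference `Δ_h^k(f,x)` relative to `[-1,1]`. -/
def symmDelta (k : ℕ) (h : ℝ) (f : ℝ → ℝ) (x : ℝ) : ℝ :=
  if (x - k * h / 2 ∈ Icc (-1 : ℝ) 1 ∧ x + k * h / 2 ∈ Icc (-1 : ℝ) 1) then
    ∑ i ∈ Finset.range (k + 1), ((k.choose i : ℝ) * (-1 : ℝ) ^ (k - i) * f (x - k * h / 2 + i * h))
  else 0

/-- Main-part weighted modulus `Ω_φ^k(f,δ)_{w,p}`. -/
def OmegaMain (k : ℕ) (f : ℝ → ℝ) (δ : ℝ) (wt : ℝ → ℝ) (p : ℝ≥0∞) : ℝ≥0∞ :=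
  ⨆ h ∈ Ioc (0 : ℝ) δ,
    LpOn (fun x => wt x * symmDelta k (h * phiW x) f x) p
      (-1 + 2 * (k : ℝ) ^ 2 * h ^ 2) (1 - 2 * (k : ℝ) ^ 2 * h ^ 2)

/-- Forward part `Ω→_φ^k(f,δ)_{w,p}`. -/
def OmegaFwd (k : ℕ) (f : ℝ → ℝ) (δ : ℝ) (wt : ℝ → ℝ) (p : ℝ≥0∞) : ℝ≥0∞ :=
  ⨆ h ∈ Ioc (0 : ℝ) (2 * (k : ℝ) ^ 2 * δ ^ 2),
    LpOn (fun x => wt x * symmDelta k h f (x + k * h / 2)) p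
      (-1) (-1 + 2 * (k : ℝ) ^ 2 * δ ^ 2)

/-- Backward part `Ω←_φ^k(f,δ)_{w,p}`. -/
def OmegaBwd (k : ℕ) (f : ℝ → ℝ) (δ : ℝ) (wt : ℝ → ℝ) (p : ℝ≥0∞) : ℝ≥0∞ :=
  ⨆ h ∈ Ioc (0 : ℝ) (2 * (k : ℝ) ^ 2 * δ ^ 2),
    LpOn (fun x => wt x * symmDelta k h f (x - k * h / 2)) p
      (1 - 2 * (k : ℝ) ^ 2 * δ ^ 2) 1

/-- Weighted Ditzian–Totik modulus `ω_φ^k(f,δ)_{w,p}`. -/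
def omegaDT (k : ℕ) (f : ℝ → ℝ) (δ : ℝ) (wt : ℝ → ℝ) (p : ℝ≥0∞) : ℝ≥0∞ :=
  OmegaMain k f δ wt p + OmegaFwd k f δ wt p + OmegaBwd k f δ wt p

/-- `f` is `k`-monotone on `(-1,1)`: all `k`-th divided differences over `k+1` distinct
points of `(-1,1)` are nonnegative. -/
def kMonotoneOn (k : ℕ) (f : ℝ → ℝ) : Prop :=
  ∀ x : Fin (k + 1) → ℝ, Function.Injective x → (∀ i, x i ∈ Ioo (-1 : ℝ) 1) →
    0 ≤ ∑ i, f (x i) / ∏ j ∈ Finset.univ.erase i, (x i - x j)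

/-- `M_+^k`, the `k`-monotone functions on `(-1,1)` vanishing on `(-1,0]`. -/
def MPlus (k : ℕ) : Set (ℝ → ℝ) :=
  {f | kMonotoneOn k f ∧ ∀ x : ℝ, -1 < x → x ≤ 0 → f x = 0}

/-- `W_p^{α,β}`. A function on `[-1,1]` is given by a function on `ℝ` whose values outside
`[-1,1]` are irrelevant. -/
def WSet (p : ℝ≥0∞) (α β : ℝ) : Set (ℝ → ℝ) :=
  {f | AEMeasurable f (volume.restrict (Icc (-1 : ℝ) 1)) ∧
    LpOn (fun x => jacobi α β x * f x) p (-1) 1 < ⊤}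

/-- The rate `Φ(δ)`. The last branch covers `k ≥ 3`, `k = 2` with `p < ∞`, and `k = 1` with
`p < 2`; there `2 / p.toReal` is `0` for `p = ∞`. -/
def rateFn (k : ℕ) (p : ℝ≥0∞) (δ : ℝ) : ℝ :=
  open Classical in
  if k = 2 ∧ p = ⊤ then δ ^ 2 * |Real.log δ|
  else if k = 1 ∧ p = 2 then δ * Real.sqrt |Real.log δ|
  else if k = 1 ∧ 2 < p then δ
  else δ ^ (2 - 2 / p.toReal)

end


/-!
A function `f ∈ M_+^k` is nonnegative and monotone.  Its cutoff, zero on `(-∞,0]` and constant on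
`[b,∞)`, has nonnegative `k`-th differences below `b`, and smoothing it by `k + 1` one-sided Steklov
averages gives `G ≤ f` with `G^{(k)} ≥ 0` below `b`.

For the main part, `|Δ_η^k G|` is at most `η^{k-1}` times the integral of `G^{(k)}` over the
stencil, so Tonelli bounds the weighted integral of the difference by
`h^k ∫ (1-t)^{β+k/2} G^{(k)}(t) dt`.  Writing `(1-t)^{β+k/2}` as an integral over the cone of
points `x` with `x - t` comparable to `1 - x`, a second use of Tonelli and Taylor's formula trade
`G^{(k)}` back for `G`, with the result
`h^k ∫_0^{1-k²h²/4} (1-x)^{β-k/2} f(x) dx`.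
Hölder's inequality then leaves the `L^q` norm of `(1-x)^{-k/2}`, which produces the rate.

At the right endpoint monotonicity dominates the differences by `f` itself and Hölder is applied
on an interval of length `2k²δ²`.  At the left endpoint the differences vanish as soon as
`2k²(k+1)δ² ≤ 1`; otherwise `δ` is bounded below, and the stencils stay below some `b < 1`
because `k²(k+1)δ₀² < 1`.
-/

section ForwardDifferences

theorem prod_range_erase_natCast_sub {i k : ℕ} (hik : i ≤ k) :
    ∏ j ∈ (Finset.range (k + 1)).erase i, ((i : ℝ) - j) =
      (-1) ^ (k - i) * (i.factorial * (k - i).factorial) := by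
  obtain ⟨d, rfl⟩ := Nat.exists_eq_add_of_le hik
  rw [Nat.add_sub_cancel_left]
  induction d with
  | zero =>
    have herase : (Finset.range (i + 0 + 1)).erase i = Finset.range i := by
      ext j; simp only [Finset.mem_erase, Finset.mem_range]; omega
    rw [herase, pow_zero, one_mul, Nat.factorial_zero, Nat.cast_one, mul_one,
      ← Finset.prod_range_add_one_eq_factorial, ← Finset.prod_range_reflect, Nat.cast_prod]
    refine Finset.prod_congr rfl fun j hj => ?_
    have hji := Finset.mem_range.1 hj
    rw [← Nat.cast_sub (by omega)]
    congr 1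
    omega
  | succ d ih =>
    have herase : (Finset.range (i + (d + 1) + 1)).erase i =
        insert (i + d + 1) ((Finset.range (i + d + 1)).erase i) := by
      ext j; simp only [Finset.mem_erase, Finset.mem_insert, Finset.mem_range]; omega
    rw [herase, Finset.prod_insert (by simp), ih (by omega), Nat.factorial_succ]
    push_cast
    ring

theorem prod_univ_erase_equispaced_sub {k : ℕ} (y η : ℝ) (i : Fin (k + 1)) :
    ∏ j ∈ Finset.univ.erase i, ((y + (i : ℕ) * η) - (y + (j : ℕ) * η)) =
      η ^ k * ((-1) ^ (k - i : ℕ) * ((i : ℕ).factorial * (k - i : ℕ).factorial)) := by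
  have hfactor (j : Fin (k + 1)) :
      (y + (i : ℕ) * η) - (y + (j : ℕ) * η) = η * (((i : ℕ) : ℝ) - (j : ℕ)) := by ring
  have hmap : (Finset.univ.erase i).map Fin.valEmbedding =
      (Finset.range (k + 1)).erase (i : ℕ) := by
    rw [Finset.map_erase, Fin.map_valEmbedding_univ, Nat.Iio_eq_range, Fin.valEmbedding_apply]
  rw [← prod_range_erase_natCast_sub (Nat.lt_succ_iff.1 i.2), ← hmap, Finset.prod_map]
  simp only [hfactor, Finset.prod_mul_distrib, Finset.prod_const, Fin.valEmbedding_apply,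
    Finset.card_erase_of_mem (Finset.mem_univ i), Finset.card_univ, Fintype.card_fin,
    Nat.add_sub_cancel]

theorem sum_div_prod_equispaced_eq_fwdDiff_iter (f : ℝ → ℝ) {η : ℝ} (hη : η ≠ 0) (y : ℝ)
    (k : ℕ) :
    ∑ i : Fin (k + 1), f (y + (i : ℕ) * η) /
        ∏ j ∈ Finset.univ.erase i, ((y + (i : ℕ) * η) - (y + (j : ℕ) * η)) =
      (k.factorial * η ^ k)⁻¹ * (fwdDiff η)^[k] f y := by
  rw [fwdDiff_iter_eq_sum_shift, Finset.sum_range, Finset.mul_sum]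
  refine Finset.sum_congr rfl fun i _ => ?_
  have hchoose : (k.choose i : ℝ) * (i : ℕ).factorial * (k - i : ℕ).factorial = k.factorial :=
    mod_cast Nat.choose_mul_factorial_mul_factorial (Nat.lt_succ_iff.1 i.2)
  have hchoose_ne : (k.choose i : ℝ) ≠ 0 :=
    mod_cast (Nat.choose_pos (Nat.lt_succ_iff.1 i.2)).ne'
  rw [prod_univ_erase_equispaced_sub, ← hchoose, zsmul_eq_mul, nsmul_eq_mul]
  push_cast
  rcases neg_one_pow_eq_or ℝ (k - i : ℕ) with h | h <;> rw [h] <;> field_simp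

variable {u v : ℝ → ℝ} {η y a b : ℝ} {j k : ℕ}

theorem fwdDiff_iter_congr (hη : 0 ≤ η) (huv : EqOn u v (Icc y (y + k * η))) :
    (fwdDiff η)^[k] u y = (fwdDiff η)^[k] v y := by
  rw [fwdDiff_iter_eq_sum_shift, fwdDiff_iter_eq_sum_shift]
  refine Finset.sum_congr rfl fun i hi => ?_
  have hik : (i : ℝ) ≤ k := mod_cast Nat.lt_succ_iff.1 (Finset.mem_range.1 hi)
  rw [nsmul_eq_mul, huv ⟨by nlinarith [i.cast_nonneg (α := ℝ)], by nlinarith⟩]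

theorem fwdDiff_iter_eq_zero (hη : 0 ≤ η) (hu : ∀ x ≤ a, u x = 0) (hy : y + k * η ≤ a) :
    (fwdDiff η)^[k] u y = 0 := by
  rw [fwdDiff_iter_congr (v := 0) hη fun x hx => hu x (hx.2.trans hy), fwdDiff_iter_eq_sum_shift]
  simp

/-- The differences of order `j` increase along the grid and vanish far to the left. -/
theorem fwdDiff_iter_nonneg_of_succ (hη : 0 < η) (hu : ∀ x ≤ a, u x = 0)
    (hsucc : ∀ y, y + (j + 1 : ℕ) * η < b → 0 ≤ (fwdDiff η)^[j + 1] u y)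
    (hy : y + j * η < b) : 0 ≤ (fwdDiff η)^[j] u y := by
  have hgrid (m : ℕ) : (fwdDiff η)^[j] u (y - m * η) ≤ (fwdDiff η)^[j] u y := by
    induction m with
    | zero => simp
    | succ m ih =>
      have hm : (0 : ℝ) ≤ m * η := by positivity
      have hstep := hsucc (y - (m + 1 : ℕ) * η) (by push_cast; linarith)
      rw [Function.iterate_succ_apply', fwdDiff, sub_nonneg] at hstep
      have hnode : y - (m + 1 : ℕ) * η + η = y - m * η := by push_cast; ring
      exact hstep.trans (hnode ▸ ih)
  obtain ⟨m, hm⟩ := exists_nat_ge ((y + j * η - a) / η)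
  rw [div_le_iff₀ hη] at hm
  refine (fwdDiff_iter_eq_zero hη.le hu ?_).symm.trans_le (hgrid m)
  linarith

theorem fwdDiff_iter_nonneg_of_le (hη : 0 < η) (hu : ∀ x ≤ a, u x = 0)
    (hk : ∀ y, y + k * η < b → 0 ≤ (fwdDiff η)^[k] u y) (hjk : j ≤ k) :
    ∀ y, y + j * η < b → 0 ≤ (fwdDiff η)^[j] u y := by
  induction hjk using Nat.decreasingInduction with
  | self => exact hk
  | of_succ j _ ih => exact fun y => fwdDiff_iter_nonneg_of_succ hη hu ih

theorem le_add_nat_mul_of_fwdDiff_nonneg (hη : 0 < η)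
    (h : ∀ y, y + η < b → 0 ≤ fwdDiff η u y) (m : ℕ) (hm : a + m * η < b) :
    u a ≤ u (a + m * η) := by
  induction m with
  | zero => simp
  | succ m ih =>
    have hnode : a + (m + 1 : ℕ) * η = a + m * η + η := by push_cast; ring
    rw [hnode] at hm ⊢
    exact (ih (by linarith)).trans (sub_nonneg.1 (h _ hm))

end ForwardDifferences

section KMonotone

variable {k : ℕ} {f : ℝ → ℝ} {η y : ℝ}

theorem kMonotoneOn.fwdDiff_iter_nonneg (hf : kMonotoneOn k f) (hη : 0 < η) (hy : -1 < y)
    (hy' : y + k * η < 1) : 0 ≤ (fwdDiff η)^[k] f y := by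
  have hinj : Function.Injective fun i : Fin (k + 1) => y + (i : ℕ) * η := by
    intro i i' h
    have := mul_right_cancel₀ hη.ne' (add_left_cancel h)
    exact Fin.ext (mod_cast this)
  have hmem (i : Fin (k + 1)) : y + (i : ℕ) * η ∈ Ioo (-1 : ℝ) 1 := by
    have hik : ((i : ℕ) : ℝ) ≤ k := mod_cast Nat.lt_succ_iff.1 i.2
    exact ⟨by nlinarith [Nat.cast_nonneg (α := ℝ) (i : ℕ)], by nlinarith⟩
  have hdiv := hf _ hinj hmem
  rw [sum_div_prod_equispaced_eq_fwdDiff_iter f hη.ne'] at hdiv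
  exact nonneg_of_mul_nonneg_right hdiv (by positivity)

theorem MPlus.eqOn_indicator (hf : f ∈ MPlus k) : EqOn ((Ioi 0).indicator f) f (Ioi (-1)) := by
  intro x hx
  by_cases h0 : 0 < x
  · exact indicator_of_mem (show x ∈ Ioi 0 from h0) f
  · rw [indicator_of_notMem (show x ∉ Ioi 0 from h0), hf.2 x hx (not_lt.1 h0)]

theorem indicator_Ioi_eq_zero (f : ℝ → ℝ) : ∀ x ≤ (0 : ℝ), (Ioi 0).indicator f x = 0 :=
  fun _ hx => indicator_of_notMem (not_lt.2 hx) f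

theorem MPlus.fwdDiff_iter_indicator_nonneg (hf : f ∈ MPlus k) (hη : 0 < η) (hkη : k * η < 1)
    (hy : y + k * η < 1) : 0 ≤ (fwdDiff η)^[k] ((Ioi 0).indicator f) y := by
  rcases le_or_gt y (-1) with hy1 | hy1
  · rw [fwdDiff_iter_eq_zero hη.le (indicator_Ioi_eq_zero f) (by linarith)]
  · rw [fwdDiff_iter_congr hη.le fun x hx => MPlus.eqOn_indicator hf (hy1.trans_le hx.1)]
    exact hf.1.fwdDiff_iter_nonneg hη hy1 hy

theorem MPlus.monotoneOn_indicator (hk : 1 ≤ k) (hf : f ∈ MPlus k) :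
    MonotoneOn ((Ioi 0).indicator f) (Iio 1) := by
  intro a _ b hb hab
  rcases hab.eq_or_lt with rfl | hab
  · rfl
  obtain ⟨m, hm⟩ := exists_nat_gt (k * (b - a))
  have hm0 : (0 : ℝ) < m := lt_of_le_of_lt (by nlinarith [k.cast_nonneg (α := ℝ)]) hm
  set η := (b - a) / m with hη_def
  have hη : 0 < η := div_pos (sub_pos.2 hab) hm0
  have hkη : k * η < 1 := by rwa [hη_def, ← mul_div_assoc, div_lt_one hm0]
  have hmη : a + m * η = b := by rw [hη_def]; field_simp; ring
  have hdiff := fwdDiff_iter_nonneg_of_le hη (indicator_Ioi_eq_zero f)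
    (fun y hy => MPlus.fwdDiff_iter_indicator_nonneg hf hη hkη hy) hk
  rw [← hmη] at hb ⊢
  exact le_add_nat_mul_of_fwdDiff_nonneg hη (by simpa using hdiff) m hb

theorem MPlus.monotoneOn (hk : 1 ≤ k) (hf : f ∈ MPlus k) : MonotoneOn f (Ioo (-1) 1) :=
  ((MPlus.monotoneOn_indicator hk hf).mono Ioo_subset_Iio_self).congr
    fun _ hx => MPlus.eqOn_indicator hf hx.1

theorem MPlus.nonneg (hk : 1 ≤ k) (hf : f ∈ MPlus k) {x : ℝ} (hx : x ∈ Ioo (-1 : ℝ) 1) :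
    0 ≤ f x := by
  rcases le_or_gt x 0 with h0 | h0
  · rw [hf.2 x hx.1 h0]
  · rw [← hf.2 0 (by norm_num) le_rfl]
    exact MPlus.monotoneOn hk hf (by norm_num) hx h0.le

end KMonotone

theorem symmDelta_eq_fwdDiff_iter {k : ℕ} {η x : ℝ} (f : ℝ → ℝ)
    (h1 : x - k * η / 2 ∈ Icc (-1 : ℝ) 1) (h2 : x + k * η / 2 ∈ Icc (-1 : ℝ) 1) :
    symmDelta k η f x = (fwdDiff η)^[k] f (x - k * η / 2) := by
  rw [symmDelta, if_pos ⟨h1, h2⟩, fwdDiff_iter_eq_sum_shift]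
  refine Finset.sum_congr rfl fun i _ => ?_
  simp only [zsmul_eq_mul, nsmul_eq_mul]
  push_cast
  ring

noncomputable section

/-- The Steklov average of `u` over `[x - ε, x]`. It turns a monotone function into a continuous
one, and a continuous function into a `C¹` one, without exceeding the original. -/
def steklov (ε : ℝ) (u : ℝ → ℝ) (x : ℝ) : ℝ := ε⁻¹ * ∫ t in (x - ε)..x, u t

/-- The backward difference quotient of `u` with step `ε`, which is the derivative of
`steklov ε u`. -/
def bwdQuot (ε : ℝ) (u : ℝ → ℝ) (x : ℝ) : ℝ := ε⁻¹ * (u x - u (x - ε))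

/-- The successive derivatives of the `(k + 1)`-fold Steklov average of `u`, for `j ≤ k`. -/
def steklovChain (ε : ℝ) (k : ℕ) (u : ℝ → ℝ) (j : ℕ) : ℝ → ℝ :=
  (bwdQuot ε)^[j] ((steklov ε)^[k + 1 - j] u)

end

section Steklov

variable {ε : ℝ} {u : ℝ → ℝ}

theorem steklov_eq_integral_shift (x : ℝ) :
    steklov ε u x = ε⁻¹ * ∫ t in (0 : ℝ)..ε, u (t + (x - ε)) := by
  rw [intervalIntegral.integral_comp_add_right (fun t => u t) (x - ε), steklov]
  simp

theorem steklov_monotone (hε : 0 < ε) (hu : Monotone u) : Monotone (steklov ε u) := by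
  intro x y hxy
  rw [steklov_eq_integral_shift, steklov_eq_integral_shift]
  have hint (x : ℝ) : IntervalIntegrable (fun t => u (t + (x - ε))) volume 0 ε :=
    Monotone.intervalIntegrable fun _ _ h => hu (by linarith)
  refine mul_le_mul_of_nonneg_left ?_ (inv_nonneg.2 hε.le)
  exact intervalIntegral.integral_mono_on hε.le (hint x) (hint y) fun t _ => hu (by linarith)

theorem steklov_le (hε : 0 < ε) (hu : Monotone u) (x : ℝ) : steklov ε u x ≤ u x := by
  have hint : ∫ t in (x - ε)..x, u t ≤ ∫ _ in (x - ε)..x, u x :=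
    intervalIntegral.integral_mono_on (by linarith) hu.intervalIntegrable (by simp)
      fun t ht => hu ht.2
  rw [intervalIntegral.integral_const, smul_eq_mul, sub_sub_cancel] at hint
  rwa [steklov, inv_mul_le_iff₀ hε]

theorem le_steklov (hε : 0 < ε) (hu : Monotone u) (x : ℝ) : u (x - ε) ≤ steklov ε u x := by
  have hint : ∫ _ in (x - ε)..x, u (x - ε) ≤ ∫ t in (x - ε)..x, u t :=
    intervalIntegral.integral_mono_on (by linarith) (by simp) hu.intervalIntegrable
      fun t ht => hu ht.1
  rw [intervalIntegral.integral_const, smul_eq_mul, sub_sub_cancel] at hint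
  rwa [steklov, le_inv_mul_iff₀ hε]

theorem steklov_nonneg (hε : 0 < ε) {x : ℝ} (h : ∀ t ≤ x, 0 ≤ u t) : 0 ≤ steklov ε u x :=
  mul_nonneg (inv_nonneg.2 hε.le)
    (intervalIntegral.integral_nonneg (by linarith) fun t ht => h t ht.2)

theorem steklov_eq_zero (hε : 0 < ε) {a : ℝ} (h : ∀ x ≤ a, u x = 0) :
    ∀ x ≤ a, steklov ε u x = 0 := by
  intro x hx
  have hzero : ∫ t in (x - ε)..x, u t = ∫ _ in (x - ε)..x, 0 :=
    intervalIntegral.integral_congr fun t ht => by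
      rw [uIcc_of_le (by linarith)] at ht
      exact h t (ht.2.trans hx)
  rw [steklov, hzero, intervalIntegral.integral_zero, mul_zero]

theorem steklov_eq_sub_primitive (hu : ∀ a b, IntervalIntegrable u volume a b) :
    steklov ε u =
      fun x => ε⁻¹ * ((∫ t in (0 : ℝ)..x, u t) - ∫ t in (0 : ℝ)..(x - ε), u t) := by
  funext x
  rw [intervalIntegral.integral_interval_sub_left (hu _ _) (hu _ _), steklov]

theorem steklov_continuous (hu : ∀ a b, IntervalIntegrable u volume a b) :
    Continuous (steklov ε u) := by
  have hprim : Continuous fun x => ∫ t in (0 : ℝ)..x, u t :=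
    intervalIntegral.continuous_primitive hu 0
  rw [steklov_eq_sub_primitive hu]
  fun_prop

theorem hasDerivAt_steklov (hu : Continuous u) (x : ℝ) :
    HasDerivAt (steklov ε u) (bwdQuot ε u x) x := by
  have hprim (x : ℝ) : HasDerivAt (fun x => ∫ t in (0 : ℝ)..x, u t) (u x) x :=
    intervalIntegral.integral_hasDerivAt_right (hu.intervalIntegrable _ _)
      (hu.stronglyMeasurableAtFilter _ _) hu.continuousAt
  rw [steklov_eq_sub_primitive fun a b => hu.intervalIntegrable a b]
  exact ((hprim x).sub ((hprim (x - ε)).comp_sub_const x ε)).const_mul ε⁻¹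

theorem steklov_iter_monotone (hε : 0 < ε) (hu : Monotone u) (j : ℕ) :
    Monotone ((steklov ε)^[j] u) :=
  Function.Iterate.rec Monotone hu (fun _ => steklov_monotone hε) j

theorem steklov_iter_le (hε : 0 < ε) (hu : Monotone u) (j : ℕ) (x : ℝ) :
    (steklov ε)^[j] u x ≤ u x := by
  induction j with
  | zero => rfl
  | succ j ih =>
    rw [Function.iterate_succ_apply']
    exact (steklov_le hε (steklov_iter_monotone hε hu j) x).trans ih

theorem le_steklov_iter (hε : 0 < ε) (hu : Monotone u) (j : ℕ) (x : ℝ) :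
    u (x - j * ε) ≤ (steklov ε)^[j] u x := by
  induction j generalizing x with
  | zero => simp
  | succ j ih =>
    rw [Function.iterate_succ_apply']
    calc u (x - (j + 1 : ℕ) * ε) = u (x - ε - j * ε) := by congr 1; push_cast; ring
      _ ≤ (steklov ε)^[j] u (x - ε) := ih (x - ε)
      _ ≤ steklov ε ((steklov ε)^[j] u) x := le_steklov hε (steklov_iter_monotone hε hu j) x

theorem steklov_iter_eq_zero (hε : 0 < ε) {a : ℝ} (h : ∀ x ≤ a, u x = 0) (j : ℕ) :
    ∀ x ≤ a, (steklov ε)^[j] u x = 0 :=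
  Function.Iterate.rec (fun v : ℝ → ℝ => ∀ x ≤ a, v x = 0) h (fun _ => steklov_eq_zero hε) j

theorem steklov_iter_continuous (hu : ∀ a b, IntervalIntegrable u volume a b) (j : ℕ) :
    Continuous ((steklov ε)^[j + 1] u) := by
  rw [Function.iterate_succ_apply]
  exact Function.Iterate.rec Continuous (steklov_continuous hu)
    (fun _ hv => steklov_continuous fun a b => hv.intervalIntegrable a b) j

theorem bwdQuot_iter_continuous (hu : Continuous u) (j : ℕ) : Continuous ((bwdQuot ε)^[j] u) :=
  Function.Iterate.rec Continuous hu (fun v hv => by unfold bwdQuot; fun_prop) j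

theorem hasDerivAt_bwdQuot_iter {u' : ℝ → ℝ} (h : ∀ x, HasDerivAt u (u' x) x) (j : ℕ) (x : ℝ) :
    HasDerivAt ((bwdQuot ε)^[j] u) ((bwdQuot ε)^[j] u' x) x := by
  induction j generalizing x with
  | zero => exact h x
  | succ j ih =>
    rw [Function.iterate_succ_apply', Function.iterate_succ_apply']
    exact ((ih x).sub ((ih (x - ε)).comp_sub_const x ε)).const_mul ε⁻¹

theorem bwdQuot_iter_eq_zero (hε : 0 < ε) {a : ℝ} (h : ∀ x ≤ a, u x = 0) (j : ℕ) :
    ∀ x ≤ a, (bwdQuot ε)^[j] u x = 0 :=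
  Function.Iterate.rec (fun v : ℝ → ℝ => ∀ x ≤ a, v x = 0) h
    (fun v hv x hx => by rw [bwdQuot, hv x hx, hv _ (by linarith), sub_zero, mul_zero]) j

theorem intervalIntegrable_comp_sub (hu : ∀ a b, IntervalIntegrable u volume a b) (a b : ℝ) :
    IntervalIntegrable (fun x => u (x - ε)) volume a b := by
  simpa using (hu (a - ε) (b - ε)).comp_sub_right ε

theorem bwdQuot_iter_intervalIntegrable (hu : ∀ a b, IntervalIntegrable u volume a b) (j : ℕ) :
    ∀ a b, IntervalIntegrable ((bwdQuot ε)^[j] u) volume a b :=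
  Function.Iterate.rec (fun v : ℝ → ℝ => ∀ a b, IntervalIntegrable v volume a b) hu
    (fun _ hv a b => ((hv a b).sub (intervalIntegrable_comp_sub hv a b)).const_mul ε⁻¹) j

theorem bwdQuot_steklov (hu : ∀ a b, IntervalIntegrable u volume a b) :
    bwdQuot ε (steklov ε u) = steklov ε (bwdQuot ε u) := by
  funext x
  have hint : ∫ t in (x - ε)..x, bwdQuot ε u t =
      ε⁻¹ * ((∫ t in (x - ε)..x, u t) - ∫ t in (x - ε - ε)..(x - ε), u t) := by
    simp only [bwdQuot]
    rw [intervalIntegral.integral_const_mul,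
      intervalIntegral.integral_sub (hu _ _) (intervalIntegrable_comp_sub hu _ _),
      intervalIntegral.integral_comp_sub_right (fun t => u t)]
  rw [steklov, hint, bwdQuot, steklov, steklov]
  ring

theorem bwdQuot_iter_steklov (hu : ∀ a b, IntervalIntegrable u volume a b) (j : ℕ) :
    (bwdQuot ε)^[j] (steklov ε u) = steklov ε ((bwdQuot ε)^[j] u) := by
  induction j with
  | zero => rfl
  | succ j ih =>
    rw [Function.iterate_succ_apply', ih, bwdQuot_steklov (bwdQuot_iter_intervalIntegrable hu j),
      Function.iterate_succ_apply']

theorem bwdQuot_iter_eq_fwdDiff_iter (j : ℕ) (x : ℝ) :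
    (bwdQuot ε)^[j] u x = ε⁻¹ ^ j * (fwdDiff ε)^[j] u (x - j * ε) := by
  induction j generalizing x with
  | zero => simp
  | succ j ih =>
    have hright : x - (j + 1 : ℕ) * ε + ε = x - j * ε := by push_cast; ring
    have hleft : x - (j + 1 : ℕ) * ε = x - ε - j * ε := by push_cast; ring
    rw [Function.iterate_succ_apply', bwdQuot, ih, ih, Function.iterate_succ_apply', fwdDiff,
      hright, hleft, pow_succ]
    ring

end Steklov

/-- `G 0, …, G k` are the successive derivatives of `G 0`; they vanish on `(-∞,0]` and the last
one is continuous, and nonnegative on `(-∞,b]`. This is the smooth counterpart of a function of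
`M_+^k` restricted to `(-1,b]`. -/
structure DerivChain (k : ℕ) (b : ℝ) (G : ℕ → ℝ → ℝ) : Prop where
  hasDerivAt : ∀ j < k, ∀ x, HasDerivAt (G j) (G (j + 1) x) x
  continuous : Continuous (G k)
  eq_zero : ∀ j ≤ k, ∀ x ≤ 0, G j x = 0
  nonneg : ∀ x ≤ b, 0 ≤ G k x

theorem derivChain_steklovChain {ε : ℝ} {u : ℝ → ℝ} {k : ℕ} {b : ℝ} (hε : 0 < ε)
    (hu : ∀ a c, IntervalIntegrable u volume a c) (hzero : ∀ x ≤ 0, u x = 0)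
    (hdiff : ∀ t ≤ b, 0 ≤ (fwdDiff ε)^[k] u (t - k * ε)) :
    DerivChain k b (steklovChain ε k u) where
  hasDerivAt j hj x := by
    obtain ⟨d, rfl⟩ := Nat.exists_eq_add_of_lt hj
    have hj1 : j + d + 1 + 1 - j = d + 1 + 1 := by omega
    have hj2 : j + d + 1 + 1 - (j + 1) = d + 1 := by omega
    rw [steklovChain, steklovChain, hj1, hj2, Function.iterate_succ_apply' (steklov ε),
      Function.iterate_succ_apply (bwdQuot ε)]
    exact hasDerivAt_bwdQuot_iter (hasDerivAt_steklov (steklov_iter_continuous hu d)) j x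
  continuous := by
    rw [steklovChain, Nat.add_sub_cancel_left]
    exact bwdQuot_iter_continuous (steklov_iter_continuous hu 0) k
  eq_zero j _ := bwdQuot_iter_eq_zero hε (steklov_iter_eq_zero hε hzero _) j
  nonneg x hx := by
    rw [steklovChain, Nat.add_sub_cancel_left, Function.iterate_one, bwdQuot_iter_steklov hu]
    refine steklov_nonneg hε fun t ht => ?_
    rw [bwdQuot_iter_eq_fwdDiff_iter]
    exact mul_nonneg (by positivity) (hdiff t (ht.trans hx))

namespace DerivChain

variable {k j : ℕ} {b s x : ℝ} {G : ℕ → ℝ → ℝ}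

theorem monotoneOn_of_succ_nonneg (hG : DerivChain k b G) (hj : j < k)
    (hnonneg : ∀ x ≤ b, 0 ≤ G (j + 1) x) : MonotoneOn (G j) (Iic b) :=
  monotoneOn_of_hasDerivWithinAt_nonneg (convex_Iic b)
    (fun x _ => (hG.hasDerivAt j hj x).continuousAt.continuousWithinAt)
    (fun x _ => (hG.hasDerivAt j hj x).hasDerivWithinAt)
    (fun x hx => hnonneg x (show x ∈ Iic b from interior_subset hx))

theorem nonneg_of_le (hG : DerivChain k b G) (hj : j ≤ k) : ∀ x ≤ b, 0 ≤ G j x := by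
  induction hj using Nat.decreasingInduction with
  | self => exact hG.nonneg
  | of_succ j hj ih =>
    intro x hx
    rcases le_or_gt x 0 with h0 | h0
    · rw [hG.eq_zero j hj.le x h0]
    · rw [← hG.eq_zero j hj.le 0 le_rfl]
      exact hG.monotoneOn_of_succ_nonneg hj ih (h0.le.trans hx) hx h0.le

theorem monotoneOn (hG : DerivChain k b G) (hj : j < k) : MonotoneOn (G j) (Iic b) :=
  hG.monotoneOn_of_succ_nonneg hj (hG.nonneg_of_le hj)

theorem mul_succ_le (hG : DerivChain k b G) (hs : 0 < s) (hx : x ≤ b) (hj : j + 1 < k) :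
    s * G (j + 1) (x - s) ≤ G j x := by
  obtain ⟨ξ, hξ, hslope⟩ := exists_hasDerivAt_eq_slope (G j) (G (j + 1)) (sub_lt_self x hs)
    (fun x _ => (hG.hasDerivAt j (by omega) x).continuousAt.continuousWithinAt)
    (fun x _ => hG.hasDerivAt j (by omega) x)
  have hmono : G (j + 1) (x - s) ≤ G (j + 1) ξ :=
    hG.monotoneOn hj (show x - s ≤ b by linarith) (hξ.2.le.trans hx) hξ.1.le
  have hnonneg : 0 ≤ G j (x - s) := hG.nonneg_of_le (by omega) _ (by linarith)
  rw [hslope, sub_sub_cancel, le_div_iff₀ hs] at hmono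
  linarith

theorem pow_mul_le (hG : DerivChain k b G) (hs : 0 < s) (hx : x ≤ b) (hj : j < k) :
    s ^ j * G j (x - j * s) ≤ G 0 x := by
  induction j with
  | zero => simp
  | succ j ih =>
    have hjs : (0 : ℝ) ≤ j * s := by positivity
    calc s ^ (j + 1) * G (j + 1) (x - (j + 1 : ℕ) * s)
        = s ^ j * (s * G (j + 1) (x - j * s - s)) := by push_cast; ring_nf
      _ ≤ s ^ j * G j (x - j * s) := by gcongr; exact hG.mul_succ_le hs (by linarith) hj
      _ ≤ G 0 x := ih (by omega)

theorem pow_mul_integral_le {n : ℕ} {a c : ℝ} (hG : DerivChain (n + 1) b G) (hs : 0 < s)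
    (hx : x ≤ b) (hac : a ≤ c) (hc : c ≤ x - n * s) :
    s ^ n * ∫ t in a..c, G (n + 1) t ≤ G 0 x := by
  have hns : (0 : ℝ) ≤ n * s := by positivity
  have hxb : x - n * s ≤ b := by linarith
  have hint : ∫ t in a..c, G (n + 1) t = G n c - G n a :=
    intervalIntegral.integral_eq_sub_of_hasDerivAt (fun x _ => hG.hasDerivAt n n.lt_succ_self x)
      (hG.continuous.intervalIntegrable _ _)
  have hmono : G n c ≤ G n (x - n * s) := hG.monotoneOn n.lt_succ_self (hc.trans hxb) hxb hc
  have hnonneg : 0 ≤ G n a := hG.nonneg_of_le n.le_succ a (by linarith)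
  calc s ^ n * ∫ t in a..c, G (n + 1) t
      ≤ s ^ n * G n (x - n * s) := by gcongr; linarith
    _ ≤ G 0 x := hG.pow_mul_le hs hx n.lt_succ_self

end DerivChain

theorem hasDerivAt_fwdDiff_iter {u u' : ℝ → ℝ} (h : ∀ x, HasDerivAt u (u' x) x) (η : ℝ) (j : ℕ)
    (x : ℝ) : HasDerivAt ((fwdDiff η)^[j] u) ((fwdDiff η)^[j] u' x) x := by
  induction j generalizing x with
  | zero => exact h x
  | succ j ih =>
    rw [Function.iterate_succ_apply', Function.iterate_succ_apply']
    exact ((ih (x + η)).comp_add_const x η).sub (ih x)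

theorem exists_fwdDiff_iter_succ_eq {u u' : ℝ → ℝ} (h : ∀ x, HasDerivAt u (u' x) x) {η : ℝ}
    (hη : 0 < η) (j : ℕ) (y : ℝ) :
    ∃ ξ ∈ Ioo y (y + η), (fwdDiff η)^[j + 1] u y = η * (fwdDiff η)^[j] u' ξ := by
  have hderiv := hasDerivAt_fwdDiff_iter h η j
  obtain ⟨ξ, hξ, hslope⟩ := exists_hasDerivAt_eq_slope _ _ (lt_add_of_pos_right y hη)
    (fun x _ => (hderiv x).continuousAt.continuousWithinAt) (fun x _ => hderiv x)
  refine ⟨ξ, hξ, ?_⟩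
  rw [Function.iterate_succ_apply', fwdDiff, hslope, add_sub_cancel_left]
  field_simp

theorem abs_fwdDiff_iter_le {n : ℕ} {G : ℕ → ℝ → ℝ}
    (hderiv : ∀ j < n + 1, ∀ x, HasDerivAt (G j) (G (j + 1) x) x)
    (hcont : Continuous (G (n + 1))) {η : ℝ} (hη : 0 < η) (y : ℝ) :
    |(fwdDiff η)^[n + 1] (G 0) y| ≤ η ^ n * ∫ t in y..(y + (n + 1) * η), |G (n + 1) t| := by
  induction n generalizing G y with
  | zero =>
    simp only [zero_add, Function.iterate_one, fwdDiff, pow_zero, one_mul, Nat.cast_zero]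
    rw [← intervalIntegral.integral_eq_sub_of_hasDerivAt (fun x _ => hderiv 0 (by omega) x)
      (hcont.intervalIntegrable _ _)]
    exact intervalIntegral.abs_integral_le_integral_abs (by linarith)
  | succ n ih =>
    obtain ⟨ξ, hξ, heq⟩ := exists_fwdDiff_iter_succ_eq (hderiv 0 (by omega)) hη (n + 1) y
    have hξη : ξ + (n + 1) * η ≤ y + ((n + 1 : ℕ) + 1) * η := by
      push_cast
      linarith [hξ.2]
    have hsub : ∫ t in ξ..(ξ + (n + 1) * η), |G (n + 2) t| ≤
        ∫ t in y..(y + ((n + 1 : ℕ) + 1) * η), |G (n + 2) t| :=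
      intervalIntegral.integral_mono_interval hξ.1.le
        (le_add_of_nonneg_right (by positivity)) hξη
        (Filter.Eventually.of_forall fun _ => abs_nonneg _) (hcont.abs.intervalIntegrable _ _)
    calc |(fwdDiff η)^[n + 1 + 1] (G 0) y|
        = η * |(fwdDiff η)^[n + 1] (G 1) ξ| := by rw [heq, abs_mul, abs_of_pos hη]
      _ ≤ η * (η ^ n * ∫ t in ξ..(ξ + (n + 1) * η), |G (n + 2) t|) := by
          gcongr
          exact ih (G := fun j => G (j + 1)) (fun j hj => hderiv (j + 1) (by omega)) hcont ξ
      _ ≤ η * (η ^ n * ∫ t in y..(y + ((n + 1 : ℕ) + 1) * η), |G (n + 2) t|) := by gcongr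
      _ = _ := by ring

noncomputable section

/-- The function that vanishes on `(-∞,0]`, equals `f` on `(0,b]` and is constant on `[b,∞)`. -/
def cutoff (f : ℝ → ℝ) (b x : ℝ) : ℝ := (Ioi 0).indicator f (min x b)

end

section Cutoff

variable {k : ℕ} {f : ℝ → ℝ} {b : ℝ}

theorem cutoff_eq_zero (f : ℝ → ℝ) (b : ℝ) : ∀ x ≤ 0, cutoff f b x = 0 :=
  fun x hx => indicator_Ioi_eq_zero f _ ((min_le_left x b).trans hx)

theorem cutoff_eq (hf : f ∈ MPlus k) {x : ℝ} (hx : -1 < x) (hxb : x ≤ b) :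
    cutoff f b x = f x := by
  rw [cutoff, min_eq_left hxb, MPlus.eqOn_indicator hf hx]

theorem cutoff_monotone (hk : 1 ≤ k) (hf : f ∈ MPlus k) (hb : b < 1) : Monotone (cutoff f b) :=
  fun _ _ hxy => MPlus.monotoneOn_indicator hk hf ((min_le_right _ _).trans_lt hb)
    ((min_le_right _ _).trans_lt hb) (min_le_min_right b hxy)

theorem fwdDiff_iter_cutoff_nonneg (hf : f ∈ MPlus k) (hb : b < 1) {η y : ℝ} (hη : 0 < η)
    (hkη : k * η < 1) (hy : y + k * η ≤ b) : 0 ≤ (fwdDiff η)^[k] (cutoff f b) y := by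
  have heq : EqOn (cutoff f b) ((Ioi 0).indicator f) (Icc y (y + k * η)) := fun x hx => by
    rw [cutoff, min_eq_left (hx.2.trans hy)]
  rw [fwdDiff_iter_congr hη.le heq]
  exact MPlus.fwdDiff_iter_indicator_nonneg hf hη hkη (hy.trans_lt hb)

theorem derivChain_steklovChain_cutoff (hk : 1 ≤ k) (hf : f ∈ MPlus k) (hb : b < 1) {ε : ℝ}
    (hε : 0 < ε) (hkε : k * ε < 1) : DerivChain k b (steklovChain ε k (cutoff f b)) :=
  derivChain_steklovChain hε (fun _ _ => (cutoff_monotone hk hf hb).intervalIntegrable)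
    (cutoff_eq_zero f b)
    fun t ht => fwdDiff_iter_cutoff_nonneg hf hb hε hkε (by linarith)

end Cutoff

theorem rpow_le_of_comparable {a b c : ℝ} (ha : 0 < a) (hc : 1 ≤ c) (hab : a ≤ c * b)
    (hba : b ≤ c * a) (r : ℝ) : b ^ r ≤ c ^ |r| * a ^ r := by
  have hc0 : 0 < c := by linarith
  have hb : 0 < b := pos_of_mul_pos_right (ha.trans_le hab) hc0.le
  rcases le_total 0 r with hr | hr
  · rw [abs_of_nonneg hr, ← Real.mul_rpow hc0.le ha.le]
    exact Real.rpow_le_rpow hb.le hba hr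
  · rw [abs_of_nonpos hr, Real.rpow_neg hc0.le, ← Real.inv_rpow hc0.le,
      ← Real.mul_rpow (inv_nonneg.2 hc0.le) ha.le]
    exact Real.rpow_le_rpow_of_nonpos (by positivity) ((inv_mul_le_iff₀ hc0).2 hab) hr

theorem sqrt_pow_eq_rpow {y : ℝ} (hy : 0 ≤ y) (k : ℕ) : √y ^ k = y ^ ((k : ℝ) / 2) := by
  rw [Real.sqrt_eq_rpow, ← Real.rpow_mul_natCast hy]
  congr 1
  ring

theorem setLIntegral_le_mul_volume {g : ℝ → ℝ≥0∞} {s t : Set ℝ} {M : ℝ≥0∞} (hst : s ⊆ t)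
    (hM : ∀ x ∈ s, g x ≤ M) : ∫⁻ x in s, g x ≤ M * volume t :=
  calc ∫⁻ x in s, g x ≤ ∫⁻ _ in s, M := setLIntegral_mono measurable_const hM
    _ = M * volume s := setLIntegral_const s M
    _ ≤ M * volume t := by gcongr

theorem mul_volume_le_setLIntegral {g : ℝ → ℝ≥0∞} {s t : Set ℝ} {M : ℝ≥0∞}
    (hs : MeasurableSet s) (hst : s ⊆ t) (hM : ∀ x ∈ s, M ≤ g x) :
    M * volume s ≤ ∫⁻ x in t, g x :=
  calc M * volume s = ∫⁻ _ in s, M := (setLIntegral_const s M).symm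
    _ ≤ ∫⁻ x in s, g x := setLIntegral_mono' hs hM
    _ ≤ ∫⁻ x in t, g x := lintegral_mono_set hst

theorem lintegral_le_setLIntegral_of_le {g G : ℝ → ℝ≥0∞} {s : Set ℝ} (hs : MeasurableSet s)
    (hle : ∀ x ∈ s, g x ≤ G x) (hzero : ∀ x ∉ s, g x = 0) :
    ∫⁻ x, g x ≤ ∫⁻ x in s, G x := by
  rw [← lintegral_indicator hs]
  refine lintegral_mono fun x => ?_
  by_cases hx : x ∈ s
  · rw [indicator_of_mem hx]; exact hle x hx
  · rw [hzero x hx]; exact zero_le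

theorem lintegral_mul_setLIntegral_swap {S : Set (ℝ × ℝ)} (hS : MeasurableSet S)
    {a d : ℝ → ℝ≥0∞} (ha : Measurable a) (hd : Measurable d) :
    ∫⁻ x, a x * ∫⁻ t in Prod.mk x ⁻¹' S, d t =
      ∫⁻ t, (∫⁻ x in (fun x => (x, t)) ⁻¹' S, a x) * d t := by
  have hkernel : Measurable (S.indicator fun z : ℝ × ℝ => a z.1 * d z.2) := by
    measurability
  calc ∫⁻ x, a x * ∫⁻ t in Prod.mk x ⁻¹' S, d t
      = ∫⁻ x, ∫⁻ t, S.indicator (fun z => a z.1 * d z.2) (x, t) := by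
        refine lintegral_congr fun x => ?_
        rw [← lintegral_const_mul _ hd, ← lintegral_indicator (measurable_prodMk_left hS)]
        rfl
    _ = ∫⁻ t, ∫⁻ x, S.indicator (fun z => a z.1 * d z.2) (x, t) :=
        lintegral_lintegral_swap hkernel.aemeasurable
    _ = ∫⁻ t, (∫⁻ x in (fun x => (x, t)) ⁻¹' S, a x) * d t := by
        refine lintegral_congr fun t => ?_
        rw [← lintegral_mul_const _ ha, ← lintegral_indicator (measurable_prodMk_right hS)]
        rfl

section Weights

variable {x : ℝ}

theorem measurable_jacobi (α β : ℝ) : Measurable (jacobi α β) := by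
  unfold jacobi; fun_prop

theorem jacobi_nonneg {α β : ℝ} (hx : x ∈ Icc (-1 : ℝ) 1) : 0 ≤ jacobi α β x :=
  mul_nonneg (Real.rpow_nonneg (by linarith [hx.1]) _) (Real.rpow_nonneg (by linarith [hx.2]) _)

theorem continuous_phiW : Continuous phiW := by
  unfold phiW; fun_prop

theorem phiW_nonneg (x : ℝ) : 0 ≤ phiW x := Real.sqrt_nonneg _

theorem phiW_pos (hx : x ∈ Ioo (-1 : ℝ) 1) : 0 < phiW x :=
  Real.sqrt_pos.2 (by nlinarith [hx.1, hx.2])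

theorem phiW_sq (hx : x ∈ Icc (-1 : ℝ) 1) : phiW x ^ 2 = (1 - x) * (1 + x) := by
  rw [phiW, Real.sq_sqrt (by nlinarith [hx.1, hx.2])]
  ring

end Weights

/-- The interval over which the main part `Ω_φ^k` integrates a difference of order `κ = k` with
step `h φ(x)`. -/
def mainInterval (κ h : ℝ) : Set ℝ := Icc (-1 + 2 * κ ^ 2 * h ^ 2) (1 - 2 * κ ^ 2 * h ^ 2)

section MainInterval

variable {κ h x : ℝ}

theorem mainInterval_subset_Icc : mainInterval κ h ⊆ Icc (-1) 1 :=
  Icc_subset_Icc (le_add_of_nonneg_right (by positivity)) (sub_le_self _ (by positivity))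

theorem mainInterval_subset_Ioo (hκ : 0 < κ) (hh : 0 < h) : mainInterval κ h ⊆ Ioo (-1) 1 :=
  Icc_subset_Ioo (lt_add_of_pos_right _ (by positivity)) (sub_lt_self _ (by positivity))

theorem mul_phiW_le_one_sub (hx : x ∈ mainInterval κ h) : κ * (h * phiW x) ≤ 1 - x := by
  have hx' := mainInterval_subset_Icc hx
  refine le_of_sq_le_sq ?_ (sub_nonneg.2 hx'.2)
  calc (κ * (h * phiW x)) ^ 2 = κ ^ 2 * h ^ 2 * phiW x ^ 2 := by ring
    _ = κ ^ 2 * h ^ 2 * (1 + x) * (1 - x) := by rw [phiW_sq hx']; ring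
    _ ≤ κ ^ 2 * h ^ 2 * 2 * (1 - x) := by gcongr <;> linarith [hx'.2]
    _ ≤ (1 - x) * (1 - x) := by gcongr <;> linarith [hx'.2, hx.2]
    _ = (1 - x) ^ 2 := by ring

theorem mul_phiW_le_one_add (hx : x ∈ mainInterval κ h) : κ * (h * phiW x) ≤ 1 + x := by
  have hx' := mainInterval_subset_Icc hx
  refine le_of_sq_le_sq ?_ (by linarith [hx'.1])
  calc (κ * (h * phiW x)) ^ 2 = κ ^ 2 * h ^ 2 * phiW x ^ 2 := by ring
    _ = κ ^ 2 * h ^ 2 * (1 - x) * (1 + x) := by rw [phiW_sq hx']; ring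
    _ ≤ κ ^ 2 * h ^ 2 * 2 * (1 + x) := by gcongr <;> linarith [hx'.1]
    _ ≤ (1 + x) * (1 + x) := by gcongr <;> linarith [hx'.1, hx.1]
    _ = (1 + x) ^ 2 := by ring

theorem sub_mem_Icc_of_mem_mainInterval (hκ : 0 ≤ κ) (hh : 0 ≤ h) (hx : x ∈ mainInterval κ h) :
    x - κ * (h * phiW x) / 2 ∈ Icc (-1 : ℝ) 1 := by
  have hpos : 0 ≤ κ * (h * phiW x) := by have := phiW_nonneg x; positivity
  constructor <;> linarith [mul_phiW_le_one_add hx, (mainInterval_subset_Icc hx).1,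
    (mainInterval_subset_Icc hx).2]

theorem add_mem_Icc_of_mem_mainInterval (hκ : 0 ≤ κ) (hh : 0 ≤ h) (hx : x ∈ mainInterval κ h) :
    x + κ * (h * phiW x) / 2 ∈ Icc (-1 : ℝ) 1 := by
  have hpos : 0 ≤ κ * (h * phiW x) := by have := phiW_nonneg x; positivity
  constructor <;> linarith [mul_phiW_le_one_sub hx, (mainInterval_subset_Icc hx).1,
    (mainInterval_subset_Icc hx).2]

end MainInterval

/-- The pairs `(x,t)` with `x` in the main interval and `t` in the stencil of the symmetric
difference of order `κ` with step `h φ(x)` at `x`. -/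
def stencilSet (κ h : ℝ) : Set (ℝ × ℝ) :=
  {z | z.1 ∈ mainInterval κ h ∧ |z.2 - z.1| ≤ κ * (h * phiW z.1) / 2}

section StencilSet

variable {κ h x t : ℝ}

theorem measurableSet_stencilSet (κ h : ℝ) : MeasurableSet (stencilSet κ h) := by
  have hφ := continuous_phiW
  exact ((isClosed_Icc.preimage continuous_fst).inter
    (isClosed_le (f := fun z : ℝ × ℝ => |z.2 - z.1|)
      (g := fun z => κ * (h * phiW z.1) / 2) (by fun_prop) (by fun_prop))).measurableSet

theorem preimage_mk_stencilSet (hx : x ∈ mainInterval κ h) :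
    Prod.mk x ⁻¹' stencilSet κ h =
      Icc (x - κ * (h * phiW x) / 2) (x + κ * (h * phiW x) / 2) := by
  ext t
  simp only [stencilSet, mem_preimage, mem_ofPred_eq, hx, true_and, mem_Icc, abs_le]
  constructor <;> rintro ⟨h1, h2⟩ <;> constructor <;> linarith

theorem one_sub_fst_le_of_mem_stencilSet (hxt : (x, t) ∈ stencilSet κ h) :
    1 - x ≤ 2 * (1 - t) := by
  linarith [(abs_le.1 hxt.2).2, mul_phiW_le_one_sub hxt.1]

theorem one_sub_snd_le_of_mem_stencilSet (hxt : (x, t) ∈ stencilSet κ h) :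
    1 - t ≤ 2 * (1 - x) := by
  linarith [(abs_le.1 hxt.2).1, mul_phiW_le_one_sub hxt.1, (mainInterval_subset_Icc hxt.1).2]

theorem one_add_snd_le_of_mem_stencilSet (hxt : (x, t) ∈ stencilSet κ h) :
    1 + t ≤ 2 * (1 + x) := by
  linarith [(abs_le.1 hxt.2).2, mul_phiW_le_one_add hxt.1, (mainInterval_subset_Icc hxt.1).1]

theorem snd_le_of_mem_stencilSet (hxt : (x, t) ∈ stencilSet κ h) : t ≤ 1 - κ ^ 2 * h ^ 2 := by
  linarith [one_sub_fst_le_of_mem_stencilSet hxt, hxt.1.2]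

theorem phiW_le_of_mem_stencilSet (ht : t ≤ 1) (hxt : (x, t) ∈ stencilSet κ h) :
    phiW x ≤ 2 * √(1 - t) := by
  have hx := mainInterval_subset_Icc hxt.1
  refine le_of_sq_le_sq ?_ (by positivity)
  rw [phiW_sq hx, mul_pow, Real.sq_sqrt (by linarith)]
  nlinarith [hx.1, hx.2, one_sub_fst_le_of_mem_stencilSet hxt]

theorem jacobi_le_of_mem_stencilSet (β : ℝ) (ht0 : 0 ≤ t) (ht1 : t < 1)
    (hxt : (x, t) ∈ stencilSet κ h) :
    jacobi β β x ≤ 2 ^ |β| * (2 ^ |β| * (1 - t) ^ β) := by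
  have hx := mainInterval_subset_Icc hxt.1
  have hleft : (1 + x) ^ β ≤ 2 ^ |β| * 1 ^ β :=
    rpow_le_of_comparable one_pos one_le_two
      (by linarith [one_add_snd_le_of_mem_stencilSet hxt]) (by linarith [hx.2]) β
  have hright : (1 - x) ^ β ≤ 2 ^ |β| * (1 - t) ^ β :=
    rpow_le_of_comparable (sub_pos.2 ht1) one_le_two (one_sub_snd_le_of_mem_stencilSet hxt)
      (one_sub_fst_le_of_mem_stencilSet hxt) β
  rw [Real.one_rpow, mul_one] at hleft
  exact mul_le_mul hleft hright (Real.rpow_nonneg (by linarith [hx.2]) _) (by positivity)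

theorem setLIntegral_stencilSet_le (β : ℝ) (n : ℕ) (hh : 0 < h) (ht0 : 0 ≤ t) (ht1 : t < 1) :
    ∫⁻ x in (fun x => (x, t)) ⁻¹' stencilSet (n + 1) h,
        ENNReal.ofReal (jacobi β β x * (h * phiW x) ^ n) ≤
      ENNReal.ofReal (2 ^ |β| * 2 ^ |β| * 2 ^ n * (2 * (n + 1)) * h ^ (n + 1) *
        (1 - t) ^ (β + (n + 1) / 2)) := by
  have ht' : 0 < 1 - t := by linarith
  have hsubset : (fun x => (x, t)) ⁻¹' stencilSet (n + 1) h ⊆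
      Icc (t - (n + 1) * h * √(1 - t)) (t + (n + 1) * h * √(1 - t)) := by
    intro x hxt
    have hradius : (n + 1) * (h * phiW x) / 2 ≤ (n + 1) * (h * (2 * √(1 - t))) / 2 := by
      gcongr
      exact phiW_le_of_mem_stencilSet ht1.le hxt
    have hdist := abs_le.1 hxt.2
    constructor <;> linarith
  have hbound : ∀ x ∈ (fun x => (x, t)) ⁻¹' stencilSet (n + 1) h,
      ENNReal.ofReal (jacobi β β x * (h * phiW x) ^ n) ≤
        ENNReal.ofReal (2 ^ |β| * (2 ^ |β| * (1 - t) ^ β) * (h * (2 * √(1 - t))) ^ n) := by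
    intro x hxt
    have hφ := phiW_nonneg x
    gcongr
    · exact jacobi_le_of_mem_stencilSet β ht0 ht1 hxt
    · exact phiW_le_of_mem_stencilSet ht1.le hxt
  refine (setLIntegral_le_mul_volume hsubset hbound).trans_eq ?_
  have hexp : (1 - t) ^ (β + (n + 1) / 2) = (1 - t) ^ β * √(1 - t) ^ (n + 1) := by
    rw [sqrt_pow_eq_rpow ht'.le, ← Real.rpow_add ht', Nat.cast_succ]
  rw [Real.volume_Icc, ← ENNReal.ofReal_mul (by positivity), hexp]
  congr 1
  ring

end StencilSet

/-- The pairs `(x,t)` with `x ∈ [1/2, B]` and `2(1-x) ≤ 1-t ≤ 4(1-x)`. Every `t` is seen from a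
set of `x` of measure comparable to `1-t`, and lies at distance comparable to `1-t` to the left of
each such `x`. -/
def coneSet (B : ℝ) : Set (ℝ × ℝ) :=
  {z | z.1 ∈ Icc (1 / 2) B ∧ z.2 ∈ Icc (4 * z.1 - 3) (2 * z.1 - 1)}

theorem measurableSet_coneSet (B : ℝ) : MeasurableSet (coneSet B) :=
  ((isClosed_Icc.preimage continuous_fst).inter
    ((isClosed_le (f := fun z : ℝ × ℝ => 4 * z.1 - 3) (by fun_prop) continuous_snd).inter
      (isClosed_le (g := fun z : ℝ × ℝ => 2 * z.1 - 1) continuous_snd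
        (by fun_prop)))).measurableSet

theorem rpow_one_sub_le_setLIntegral_coneSet (γ : ℝ) {m t : ℝ} (hm : 0 < m) (ht0 : 0 ≤ t)
    (ht1 : t ≤ 1 - m) :
    ENNReal.ofReal ((1 - t) ^ γ) ≤ ENNReal.ofReal (4 * 4 ^ |γ - 1|) *
      ∫⁻ x in (fun x => (x, t)) ⁻¹' coneSet (1 - m / 4), ENNReal.ofReal ((1 - x) ^ (γ - 1)) := by
  have ht' : 0 < 1 - t := by linarith
  have hsubset : Icc (1 - (1 - t) / 2) (1 - (1 - t) / 4) ⊆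
      (fun x => (x, t)) ⁻¹' coneSet (1 - m / 4) := fun x hx =>
    ⟨⟨by linarith [hx.1], by linarith [hx.2]⟩, by linarith [hx.2], by linarith [hx.1]⟩
  have hbound : ∀ x ∈ Icc (1 - (1 - t) / 2) (1 - (1 - t) / 4),
      ENNReal.ofReal ((4 ^ |γ - 1|)⁻¹ * (1 - t) ^ (γ - 1)) ≤
        ENNReal.ofReal ((1 - x) ^ (γ - 1)) := fun x hx => by
    refine ENNReal.ofReal_le_ofReal ((inv_mul_le_iff₀ (by positivity)).2 ?_)
    exact rpow_le_of_comparable (by linarith [hx.2]) (by norm_num) (by linarith [hx.1])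
      (by linarith [hx.2]) _
  have hexp : (1 - t) ^ γ = (1 - t) ^ (γ - 1) * (1 - t) := by
    rw [← Real.rpow_add_one ht'.ne', sub_add_cancel]
  calc ENNReal.ofReal ((1 - t) ^ γ)
      = ENNReal.ofReal (4 * 4 ^ |γ - 1|) * (ENNReal.ofReal ((4 ^ |γ - 1|)⁻¹ * (1 - t) ^ (γ - 1)) *
          volume (Icc (1 - (1 - t) / 2) (1 - (1 - t) / 4))) := by
        rw [Real.volume_Icc, ← ENNReal.ofReal_mul (by positivity),
          ← ENNReal.ofReal_mul (by positivity), hexp]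
        congr 1
        field_simp
        ring
    _ ≤ _ := by
        gcongr
        exact mul_volume_le_setLIntegral measurableSet_Icc hsubset hbound

theorem exists_stencilSet_le_coneSet (β : ℝ) (n : ℕ) :
    ∃ C : ℝ, 0 < C ∧ ∀ h > 0, ∀ t ≥ 0,
      ∫⁻ x in (fun x => (x, t)) ⁻¹' stencilSet (n + 1) h,
          ENNReal.ofReal (jacobi β β x * (h * phiW x) ^ n) ≤
        ENNReal.ofReal (C * h ^ (n + 1)) *
          ∫⁻ x in (fun x => (x, t)) ⁻¹' coneSet (1 - (n + 1) ^ 2 * h ^ 2 / 4),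
            ENNReal.ofReal ((1 - x) ^ (β + (n + 1) / 2 - 1)) := by
  set γ : ℝ := β + (n + 1) / 2
  refine ⟨2 ^ |β| * 2 ^ |β| * 2 ^ n * (2 * (n + 1)) * (4 * 4 ^ |γ - 1|), by positivity,
    fun h hh t ht0 => ?_⟩
  have hm : (0 : ℝ) < (n + 1) ^ 2 * h ^ 2 := by positivity
  rcases le_or_gt t (1 - (n + 1) ^ 2 * h ^ 2) with ht1 | ht1
  · refine (setLIntegral_stencilSet_le β n hh ht0 (by linarith)).trans ?_
    rw [ENNReal.ofReal_mul (by positivity), mul_right_comm _ (4 * 4 ^ |γ - 1|) (h ^ (n + 1)),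
      ENNReal.ofReal_mul (q := 4 * 4 ^ |γ - 1|) (by positivity), mul_assoc (ENNReal.ofReal _)]
    gcongr
    exact rpow_one_sub_le_setLIntegral_coneSet γ hm ht0 ht1
  · have hempty : (fun x => (x, t)) ⁻¹' stencilSet (n + 1) h = ∅ :=
      eq_empty_of_forall_notMem fun x hxt => ht1.not_ge (snd_le_of_mem_stencilSet hxt)
    rw [hempty, Measure.restrict_empty, lintegral_zero_measure]
    exact zero_le

namespace DerivChain

variable {k n : ℕ} {b h x : ℝ} {G : ℕ → ℝ → ℝ}

theorem continuous_zero (hG : DerivChain (n + 1) b G) : Continuous (G 0) :=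
  continuous_iff_continuousAt.2 fun x => (hG.hasDerivAt 0 n.succ_pos x).continuousAt

theorem setLIntegral_Icc {a c : ℝ} (hG : DerivChain k b G) (hac : a ≤ c) (hc : c ≤ b) :
    ∫⁻ t in Icc a c, ENNReal.ofReal (G k t) = ENNReal.ofReal (∫ t in a..c, G k t) := by
  rw [intervalIntegral.integral_of_le hac, ← integral_Icc_eq_integral_Ioc]
  refine (ofReal_integral_eq_lintegral_ofReal hG.continuous.integrableOn_Icc ?_).symm
  exact (ae_restrict_mem measurableSet_Icc).mono fun t ht => hG.nonneg t (ht.2.trans hc)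

theorem abs_symmDelta_le (hG : DerivChain (n + 1) b G) {η : ℝ} (hη : 0 < η)
    (hleft : x - (n + 1 : ℕ) * η / 2 ∈ Icc (-1 : ℝ) 1)
    (hright : x + (n + 1 : ℕ) * η / 2 ∈ Icc (-1 : ℝ) 1) (hb : x + (n + 1 : ℕ) * η / 2 ≤ b) :
    |symmDelta (n + 1) η (G 0) x| ≤
      η ^ n * ∫ t in (x - (n + 1 : ℕ) * η / 2)..(x + (n + 1 : ℕ) * η / 2), G (n + 1) t := by
  rw [symmDelta_eq_fwdDiff_iter _ hleft hright]
  refine (abs_fwdDiff_iter_le hG.hasDerivAt hG.continuous hη _).trans_eq ?_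
  have hend : x - (n + 1 : ℕ) * η / 2 + (n + 1) * η = x + (n + 1 : ℕ) * η / 2 := by
    push_cast
    ring
  have hle : x - (n + 1 : ℕ) * η / 2 ≤ x + (n + 1 : ℕ) * η / 2 := by
    rw [← hend]
    exact le_add_of_nonneg_right (by positivity)
  rw [hend]
  congr 1
  refine intervalIntegral.integral_congr fun t ht => abs_of_nonneg (hG.nonneg t ?_)
  rw [uIcc_of_le hle] at ht
  exact ht.2.trans hb

theorem enorm_jacobi_mul_symmDelta_le (hG : DerivChain (n + 1) b G)
    (hb : 1 - (n + 1) ^ 2 * h ^ 2 ≤ b) (hh : 0 < h) (β : ℝ) (hx : x ∈ mainInterval (n + 1) h) :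
    ‖jacobi β β x * symmDelta (n + 1) (h * phiW x) (G 0) x‖ₑ ≤
      ENNReal.ofReal (jacobi β β x * (h * phiW x) ^ n) *
        ∫⁻ t in Prod.mk x ⁻¹' stencilSet (n + 1) h, ENNReal.ofReal (G (n + 1) t) := by
  have hφ : 0 < phiW x := phiW_pos (mainInterval_subset_Ioo (by positivity) hh hx)
  have hw : 0 ≤ jacobi β β x := jacobi_nonneg (mainInterval_subset_Icc hx)
  have hradius : 0 ≤ (n + 1) * (h * phiW x) / 2 := by positivity
  have hend : x + (n + 1) * (h * phiW x) / 2 ≤ b := by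
    linarith [mul_phiW_le_one_sub hx, hx.2]
  have hsymm := hG.abs_symmDelta_le (η := h * phiW x) (x := x) (by positivity)
    (by push_cast; exact sub_mem_Icc_of_mem_mainInterval (by positivity) hh.le hx)
    (by push_cast; exact add_mem_Icc_of_mem_mainInterval (by positivity) hh.le hx)
    (by push_cast; exact hend)
  push_cast at hsymm
  rw [preimage_mk_stencilSet hx, hG.setLIntegral_Icc (by linarith) hend,
    ← ENNReal.ofReal_mul (by positivity), Real.enorm_eq_ofReal_abs, abs_mul, abs_of_nonneg hw,
    mul_assoc]
  gcongr

theorem rpow_mul_setLIntegral_coneSet_le {B : ℝ} (hG : DerivChain (n + 1) B G) (hB : B < 1) (β : ℝ)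
    (hx : x ∈ Icc (1 / 2) B) :
    ENNReal.ofReal ((1 - x) ^ (β + (n + 1) / 2 - 1)) *
        ∫⁻ t in Prod.mk x ⁻¹' coneSet B, ENNReal.ofReal (G (n + 1) t) ≤
      ENNReal.ofReal ((n + 1) ^ n) *
        ENNReal.ofReal ((1 - x) ^ (β - (n + 1) / 2) * G 0 x) := by
  have hx1 : 0 < 1 - x := by linarith [hx.2]
  have hsection : Prod.mk x ⁻¹' coneSet B = Icc (4 * x - 3) (2 * x - 1) :=
    ext fun t => and_iff_right hx
  have hstep : (n : ℝ) * ((1 - x) / (n + 1)) ≤ 1 - x := by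
    rw [mul_div_assoc', div_le_iff₀ (by positivity)]
    linarith
  have hintegral : ((1 - x) / (n + 1)) ^ n * ∫ t in (4 * x - 3)..(2 * x - 1), G (n + 1) t ≤ G 0 x :=
    hG.pow_mul_integral_le (by positivity) hx.2 (by linarith) (by linarith)
  have hexp : (1 - x) ^ (β + (n + 1) / 2 - 1) =
      (n + 1) ^ n * ((1 - x) ^ (β - (n + 1) / 2) * ((1 - x) / (n + 1)) ^ n) := by
    rw [show β + ((n : ℝ) + 1) / 2 - 1 = β - (n + 1) / 2 + n by ring, Real.rpow_add hx1,
      Real.rpow_natCast, div_pow]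
    field_simp
  rw [hsection, hG.setLIntegral_Icc (by linarith) (by linarith [hx.2]),
    ← ENNReal.ofReal_mul (by positivity), ← ENNReal.ofReal_mul (by positivity), hexp,
    mul_assoc, mul_assoc]
  gcongr

theorem lintegral_coneSet_le {B : ℝ} (hG : DerivChain (n + 1) B G) (hB : B < 1) (β : ℝ) :
    ∫⁻ x, ENNReal.ofReal ((1 - x) ^ (β + (n + 1) / 2 - 1)) *
        ∫⁻ t in Prod.mk x ⁻¹' coneSet B, ENNReal.ofReal (G (n + 1) t) ≤
      ENNReal.ofReal ((n + 1) ^ n) *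
        ∫⁻ x in Icc 0 B, ENNReal.ofReal ((1 - x) ^ (β - (n + 1) / 2) * G 0 x) := by
  have hG0 := hG.continuous_zero.measurable
  rw [← lintegral_const_mul _ (by fun_prop)]
  calc _ ≤ ∫⁻ x in Icc (1 / 2) B, ENNReal.ofReal ((n + 1) ^ n) *
          ENNReal.ofReal ((1 - x) ^ (β - (n + 1) / 2) * G 0 x) := by
        refine lintegral_le_setLIntegral_of_le measurableSet_Icc
          (fun x => hG.rpow_mul_setLIntegral_coneSet_le hB β) fun x hx => ?_
        have hempty : Prod.mk x ⁻¹' coneSet B = ∅ :=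
          eq_empty_of_forall_notMem fun t ht => hx ht.1
        rw [hempty, Measure.restrict_empty, lintegral_zero_measure, mul_zero]
    _ ≤ _ := lintegral_mono_set (Icc_subset_Icc_left (by norm_num))

theorem exists_setLIntegral_symmDelta_le (β : ℝ) (n : ℕ) :
    ∃ C : ℝ, 0 < C ∧ ∀ h > 0, ∀ G, DerivChain (n + 1) (1 - (n + 1) ^ 2 * h ^ 2 / 4) G →
      ∫⁻ x in mainInterval (n + 1) h, ‖jacobi β β x * symmDelta (n + 1) (h * phiW x) (G 0) x‖ₑ ≤
        ENNReal.ofReal (C * h ^ (n + 1)) * ∫⁻ x in Icc 0 (1 - (n + 1) ^ 2 * h ^ 2 / 4),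
          ENNReal.ofReal ((1 - x) ^ (β - (n + 1) / 2) * G 0 x) := by
  obtain ⟨C, hC, hcone⟩ := exists_stencilSet_le_coneSet β n
  refine ⟨C * (n + 1) ^ n, by positivity, fun h hh G hG => ?_⟩
  have hm : (0 : ℝ) < (n + 1) ^ 2 * h ^ 2 := by positivity
  have hw := measurable_jacobi β β
  have hφ := continuous_phiW.measurable
  have hd : Measurable fun t => ENNReal.ofReal (G (n + 1) t) :=
    hG.continuous.measurable.ennreal_ofReal
  calc _ ≤ ∫⁻ x in mainInterval (n + 1) h, ENNReal.ofReal (jacobi β β x * (h * phiW x) ^ n) *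
          ∫⁻ t in Prod.mk x ⁻¹' stencilSet (n + 1) h, ENNReal.ofReal (G (n + 1) t) :=
        setLIntegral_mono' measurableSet_Icc fun x =>
          hG.enorm_jacobi_mul_symmDelta_le (by linarith) hh β
    _ ≤ ∫⁻ x, ENNReal.ofReal (jacobi β β x * (h * phiW x) ^ n) *
          ∫⁻ t in Prod.mk x ⁻¹' stencilSet (n + 1) h, ENNReal.ofReal (G (n + 1) t) :=
        setLIntegral_le_lintegral _ _
    _ = ∫⁻ t, (∫⁻ x in (fun x => (x, t)) ⁻¹' stencilSet (n + 1) h,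
          ENNReal.ofReal (jacobi β β x * (h * phiW x) ^ n)) * ENNReal.ofReal (G (n + 1) t) :=
        lintegral_mul_setLIntegral_swap (measurableSet_stencilSet _ _) (by fun_prop) hd
    _ ≤ ∫⁻ t, ENNReal.ofReal (C * h ^ (n + 1)) *
          ((∫⁻ x in (fun x => (x, t)) ⁻¹' coneSet (1 - (n + 1) ^ 2 * h ^ 2 / 4),
            ENNReal.ofReal ((1 - x) ^ (β + (n + 1) / 2 - 1))) * ENNReal.ofReal (G (n + 1) t)) := by
        refine lintegral_mono fun t => ?_
        rcases le_total 0 t with ht | ht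
        · rw [← mul_assoc]
          gcongr
          exact hcone h hh t ht
        · simp only [hG.eq_zero _ le_rfl t ht, ENNReal.ofReal_zero, mul_zero, le_refl]
    _ = ENNReal.ofReal (C * h ^ (n + 1)) *
          ∫⁻ x, ENNReal.ofReal ((1 - x) ^ (β + (n + 1) / 2 - 1)) *
            ∫⁻ t in Prod.mk x ⁻¹' coneSet (1 - (n + 1) ^ 2 * h ^ 2 / 4),
              ENNReal.ofReal (G (n + 1) t) := by
        rw [lintegral_const_mul' _ _ ENNReal.ofReal_ne_top,
          lintegral_mul_setLIntegral_swap (measurableSet_coneSet _) (by fun_prop) hd]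
    _ ≤ ENNReal.ofReal (C * h ^ (n + 1)) * (ENNReal.ofReal ((n + 1) ^ n) *
          ∫⁻ x in Icc 0 (1 - (n + 1) ^ 2 * h ^ 2 / 4),
            ENNReal.ofReal ((1 - x) ^ (β - (n + 1) / 2) * G 0 x)) := by
        gcongr
        exact hG.lintegral_coneSet_le (by linarith) β
    _ = _ := by
        rw [← mul_assoc, ← ENNReal.ofReal_mul (by positivity), mul_right_comm]

end DerivChain

theorem countable_setOf_add_mul_phiW_mem (c : ℝ) {D : Set ℝ} (hD : D.Countable) :
    {x : ℝ | x ∈ Icc (-1 : ℝ) 1 ∧ x + c * phiW x ∈ D}.Countable := by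
  have hsubset : {x : ℝ | x ∈ Icc (-1 : ℝ) 1 ∧ x + c * phiW x ∈ D} ⊆
      ⋃ y ∈ D, {(y + √(y ^ 2 - (1 + c ^ 2) * (y ^ 2 - c ^ 2))) / (1 + c ^ 2),
        (y - √(y ^ 2 - (1 + c ^ 2) * (y ^ 2 - c ^ 2))) / (1 + c ^ 2)} := by
    rintro x ⟨hx, hxD⟩
    refine mem_biUnion hxD ?_
    generalize hy : x + c * phiW x = y
    have hquadratic : (y - x) ^ 2 = c ^ 2 * ((1 - x) * (1 + x)) := by
      rw [← phiW_sq hx, ← hy]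
      ring
    have hdiscr : y ^ 2 - (1 + c ^ 2) * (y ^ 2 - c ^ 2) = ((1 + c ^ 2) * x - y) ^ 2 := by
      linear_combination (-(1 + c ^ 2)) * hquadratic
    rw [hdiscr, Real.sqrt_sq_eq_abs]
    rcases abs_choice ((1 + c ^ 2) * x - y) with h | h <;> rw [h]
    · left
      field_simp
      ring
    · right
      rw [mem_singleton_iff]
      field_simp
      ring
  exact (hD.biUnion fun y _ => (Set.toFinite _).countable).mono hsubset

theorem measurable_symmDelta (k : ℕ) (h : ℝ) {u : ℝ → ℝ} (hu : Continuous u) :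
    Measurable fun x => symmDelta k (h * phiW x) u x := by
  have hφ := continuous_phiW
  unfold symmDelta
  refine Measurable.ite ?_ (Continuous.measurable (by fun_prop)) measurable_const
  exact ((isClosed_Icc.preimage (f := fun x => x - k * (h * phiW x) / 2) (by fun_prop)).inter
    (isClosed_Icc.preimage (f := fun x => x + k * (h * phiW x) / 2) (by fun_prop))).measurableSet

section Approximation

open Filter Topology

theorem tendsto_steklov_iter {u : ℝ → ℝ} (hu : Monotone u) {y : ℝ} (hy : ContinuousAt u y) (j : ℕ)
    {ε : ℕ → ℝ} (hε : ∀ i, 0 < ε i) (hlim : Tendsto ε atTop (𝓝 0)) :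
    Tendsto (fun i => (steklov (ε i))^[j] u y) atTop (𝓝 (u y)) := by
  have hshift : Tendsto (fun i => y - j * ε i) atTop (𝓝 y) := by
    simpa using tendsto_const_nhds.sub (hlim.const_mul (j : ℝ))
  exact tendsto_of_tendsto_of_tendsto_of_le_of_le (hy.tendsto.comp hshift) tendsto_const_nhds
    (fun i => le_steklov_iter (hε i) hu j y) (fun i => steklov_iter_le (hε i) hu j y)

theorem ae_tendsto_symmDelta {k : ℕ} {h : ℝ} {v : ℝ → ℝ} {u : ℕ → ℝ → ℝ} (hv : Monotone v)
    (hlim : ∀ y, ContinuousAt v y → Tendsto (fun i => u i y) atTop (𝓝 (v y))) :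
    ∀ᵐ x, x ∈ Icc (-1 : ℝ) 1 → Tendsto (fun i => symmDelta k (h * phiW x) (u i) x) atTop
      (𝓝 (symmDelta k (h * phiW x) v x)) := by
  have hnodes : ∀ᵐ x, ∀ i : ℕ, x ∈ Icc (-1 : ℝ) 1 →
      ContinuousAt v (x + h * (i - k / 2) * phiW x) := by
    refine ae_all_iff.2 fun i => ?_
    filter_upwards [(countable_setOf_add_mul_phiW_mem (h * (i - k / 2))
      hv.countable_not_continuousAt).ae_notMem volume] with x hx hxI
    exact not_not.1 fun hdisc => hx ⟨hxI, hdisc⟩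
  filter_upwards [hnodes] with x hx hxI
  unfold symmDelta
  split_ifs
  · refine tendsto_finsetSum _ fun i _ => Tendsto.const_mul _ (hlim _ ?_)
    convert hx i hxI using 1
    ring
  · exact tendsto_const_nhds

theorem symmDelta_congr {k : ℕ} {η x : ℝ} {f g : ℝ → ℝ} (hη : 0 ≤ η)
    (h : ∀ y ∈ Icc (x - k * η / 2) (x + k * η / 2), f y = g y) :
    symmDelta k η f x = symmDelta k η g x := by
  unfold symmDelta
  refine if_congr Iff.rfl (Finset.sum_congr rfl fun i hi => ?_) rfl
  have hik : (i : ℝ) ≤ k := Nat.cast_le.2 (Nat.lt_succ_iff.1 (Finset.mem_range.1 hi))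
  have hnode : (i : ℝ) * η ≤ k * η := by gcongr
  have hnonneg : 0 ≤ (i : ℝ) * η := by positivity
  rw [h _ ⟨by linarith, by linarith⟩]

theorem symmDelta_cutoff {k : ℕ} {f : ℝ → ℝ} {b h x : ℝ} (hk : 1 ≤ k) (hf : f ∈ MPlus k)
    (hh : 0 < h) (hb : 1 - k ^ 2 * h ^ 2 ≤ b) (hx : x ∈ mainInterval k h) :
    symmDelta k (h * phiW x) (cutoff f b) x = symmDelta k (h * phiW x) f x := by
  have hφ := phiW_nonneg x
  have hm : (0 : ℝ) < k ^ 2 * h ^ 2 := by positivity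
  refine symmDelta_congr (by positivity) fun y hy => cutoff_eq hf ?_ ?_
  · linarith [hy.1, mul_phiW_le_one_add hx, hx.1]
  · linarith [hy.2, mul_phiW_le_one_sub hx, hx.2]

theorem exists_derivChain_tendsto_cutoff {k : ℕ} {f : ℝ → ℝ} {b : ℝ} (hk : 1 ≤ k)
    (hf : f ∈ MPlus k) (hb : b < 1) :
    ∃ G : ℕ → ℕ → ℝ → ℝ, (∀ i, DerivChain k b (G i)) ∧ (∀ i x, G i 0 x ≤ cutoff f b x) ∧
      ∀ y, ContinuousAt (cutoff f b) y → Tendsto (fun i => G i 0 y) atTop (𝓝 (cutoff f b y)) := by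
  have hmono := cutoff_monotone hk hf hb
  set ε : ℕ → ℝ := fun i => ((i + (k + 1) : ℕ) : ℝ)⁻¹
  have hε : ∀ i, 0 < ε i := fun i => by positivity
  have hkε : ∀ i, k * ε i < 1 := fun i => by
    rw [mul_inv_lt_iff₀ (by positivity), one_mul]
    exact_mod_cast (by omega : k < i + (k + 1))
  have hεlim : Tendsto ε atTop (𝓝 0) :=
    tendsto_inv_atTop_nhds_zero_nat.comp (tendsto_add_atTop_nat (k + 1))
  exact ⟨fun i => steklovChain (ε i) k (cutoff f b),
    fun i => derivChain_steklovChain_cutoff hk hf hb (hε i) (hkε i),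
    fun i => steklov_iter_le (hε i) hmono _,
    fun y hy => tendsto_steklov_iter hmono hy _ hε hεlim⟩

theorem lintegral_le_of_ae_tendsto {α : Type*} [MeasurableSpace α] {μ : Measure α}
    {F : ℕ → α → ℝ≥0∞} {g : α → ℝ≥0∞} {M : ℝ≥0∞} (hF : ∀ i, Measurable (F i))
    (hlim : ∀ᵐ x ∂μ, Tendsto (fun i => F i x) atTop (𝓝 (g x))) (hM : ∀ i, ∫⁻ x, F i x ∂μ ≤ M) :
    ∫⁻ x, g x ∂μ ≤ M :=
  calc ∫⁻ x, g x ∂μ = ∫⁻ x, liminf (fun i => F i x) atTop ∂μ :=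
        lintegral_congr_ae (hlim.mono fun x hx => hx.liminf_eq.symm)
    _ ≤ liminf (fun i => ∫⁻ x, F i x ∂μ) atTop := lintegral_liminf_le hF
    _ ≤ liminf (fun _ : ℕ => M) atTop := liminf_le_liminf (Eventually.of_forall hM)
    _ = M := liminf_const M

theorem MPlus.exists_setLIntegral_symmDelta_le (β : ℝ) {k : ℕ} (hk : 1 ≤ k) :
    ∃ C : ℝ, 0 < C ∧ ∀ h > 0, ∀ f ∈ MPlus k,
      ∫⁻ x in mainInterval k h, ‖jacobi β β x * symmDelta k (h * phiW x) f x‖ₑ ≤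
        ENNReal.ofReal (C * h ^ k) * ∫⁻ x in Icc 0 (1 - k ^ 2 * h ^ 2 / 4),
          ENNReal.ofReal ((1 - x) ^ (β - k / 2) * f x) := by
  obtain ⟨n, rfl⟩ := Nat.exists_eq_add_of_le' hk
  obtain ⟨C, hC, hsmooth⟩ := DerivChain.exists_setLIntegral_symmDelta_le β n
  refine ⟨C, hC, fun h hh f hf => ?_⟩
  push_cast
  have hm : (0 : ℝ) < (n + 1) ^ 2 * h ^ 2 := by positivity
  have hb : 1 - (n + 1 : ℝ) ^ 2 * h ^ 2 / 4 < 1 := by linarith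
  obtain ⟨G, hG, hGle, hGlim⟩ := exists_derivChain_tendsto_cutoff hk hf hb
  refine lintegral_le_of_ae_tendsto
    (F := fun i x => ‖jacobi β β x * symmDelta (n + 1) (h * phiW x) (G i 0) x‖ₑ)
    (fun i => ((measurable_jacobi β β).mul
      (measurable_symmDelta _ _ (hG i).continuous_zero)).enorm) ?_ fun i => ?_
  · filter_upwards [ae_restrict_of_ae (ae_tendsto_symmDelta (cutoff_monotone hk hf hb) hGlim),
      ae_restrict_mem measurableSet_Icc] with x hx hxI
    rw [← symmDelta_cutoff hk hf hh (b := 1 - (n + 1) ^ 2 * h ^ 2 / 4)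
      (by push_cast; linarith) (by push_cast; exact hxI)]
    exact ((hx (mainInterval_subset_Icc hxI)).const_mul _).enorm
  · refine (hsmooth h hh (G i) (hG i)).trans ?_
    gcongr 1
    refine setLIntegral_mono' measurableSet_Icc fun x hx => ?_
    have h1x : 0 ≤ 1 - x := by linarith [hx.2]
    gcongr
    exact (hGle i x).trans_eq (cutoff_eq hf (by linarith [hx.1]) hx.2)

end Approximation

section PowerIntegrals

variable {a τ : ℝ}

theorem integral_rpow_nonneg (a : ℝ) (hτ : 0 < τ) (hτ1 : τ ≤ 1) : 0 ≤ ∫ s in τ..1, s ^ a :=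
  intervalIntegral.integral_nonneg hτ1 fun _ hs => Real.rpow_nonneg (hτ.le.trans hs.1) _

theorem integral_rpow_neg_le_of_one_lt (ha : 1 < a) (hτ : 0 < τ) (hτ1 : τ ≤ 1) :
    ∫ s in τ..1, s ^ (-a) ≤ (a - 1)⁻¹ * τ ^ (1 - a) := by
  have hzero : (0 : ℝ) ∉ uIcc τ 1 := by
    rw [uIcc_of_le hτ1]
    exact fun h => h.1.not_gt hτ
  have hpos : 0 < a - 1 := by linarith
  calc ∫ s in τ..1, s ^ (-a) = (a - 1)⁻¹ * (τ ^ (1 - a) - 1) := by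
        rw [integral_rpow (Or.inr ⟨by linarith, hzero⟩), Real.one_rpow,
          show -a + 1 = -(a - 1) by ring, show 1 - a = -(a - 1) by ring]
        field_simp
        ring
    _ ≤ (a - 1)⁻¹ * τ ^ (1 - a) := by gcongr; linarith

theorem integral_rpow_neg_le_of_lt_one (ha : a < 1) (hτ : 0 < τ) :
    ∫ s in τ..1, s ^ (-a) ≤ (1 - a)⁻¹ := by
  have : 0 < 1 - a := by linarith
  calc ∫ s in τ..1, s ^ (-a) = (1 - a)⁻¹ * (1 - τ ^ (1 - a)) := by
        rw [integral_rpow (Or.inl (by linarith)), Real.one_rpow, neg_add_eq_sub, div_eq_inv_mul]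
    _ ≤ (1 - a)⁻¹ :=
        mul_le_of_le_one_right (by positivity) (sub_le_self 1 (by positivity))

theorem integral_rpow_neg_one (hτ : 0 < τ) : ∫ s in τ..1, s ^ (-1 : ℝ) = -Real.log τ := by
  simp only [Real.rpow_neg_one]
  rw [integral_inv_of_pos hτ one_pos, one_div, Real.log_inv]

theorem setLIntegral_one_sub_rpow (a : ℝ) (hτ : 0 < τ) (hτ1 : τ ≤ 1) :
    ∫⁻ x in Icc 0 (1 - τ), ENNReal.ofReal ((1 - x) ^ a) =
      ENNReal.ofReal (∫ s in τ..1, s ^ a) := by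
  have hcont : ContinuousOn (fun x : ℝ => (1 - x) ^ a) (Icc 0 (1 - τ)) :=
    ContinuousOn.rpow_const (by fun_prop) fun x hx => Or.inl (by linarith [hx.2] : 0 < 1 - x).ne'
  rw [← ofReal_integral_eq_lintegral_ofReal (hcont.integrableOn_compact isCompact_Icc)
      ((ae_restrict_mem measurableSet_Icc).mono fun x hx =>
        Real.rpow_nonneg (by linarith [hx.2]) _),
    integral_Icc_eq_integral_Ioc, ← intervalIntegral.integral_of_le (by linarith),
    intervalIntegral.integral_comp_sub_left (fun s => s ^ a), sub_sub_cancel, sub_zero]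

theorem eLpNorm_one_sub_rpow (κ : ℝ) (hτ : 0 < τ) (hτ1 : τ ≤ 1) {q : ℝ≥0∞} (hq0 : q ≠ 0)
    (hq : q ≠ ⊤) :
    eLpNorm (fun x : ℝ => (1 - x) ^ (-κ)) q (volume.restrict (Icc 0 (1 - τ))) =
      ENNReal.ofReal ((∫ s in τ..1, s ^ (-(κ * q.toReal))) ^ (1 / q.toReal)) := by
  have hqr : 0 < q.toReal := ENNReal.toReal_pos hq0 hq
  have hpow : ∫⁻ x in Icc 0 (1 - τ), ‖(1 - x) ^ (-κ)‖ₑ ^ q.toReal =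
      ∫⁻ x in Icc 0 (1 - τ), ENNReal.ofReal ((1 - x) ^ (-(κ * q.toReal))) := by
    refine setLIntegral_congr_fun measurableSet_Icc fun x hx => ?_
    have hx1 : 0 ≤ 1 - x := by linarith [hx.2]
    have hnonneg : 0 ≤ (1 - x) ^ (-κ) := Real.rpow_nonneg hx1 _
    rw [Real.enorm_eq_ofReal hnonneg, ENNReal.ofReal_rpow_of_nonneg hnonneg hqr.le,
      ← Real.rpow_mul hx1, neg_mul]
  rw [eLpNorm_eq_lintegral_rpow_enorm_toReal hq0 hq, hpow, setLIntegral_one_sub_rpow _ hτ hτ1,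
    ENNReal.ofReal_rpow_of_nonneg (integral_rpow_nonneg _ hτ hτ1) (by positivity)]

theorem eLpNorm_top_one_sub_rpow_le {κ : ℝ} (hκ : 0 ≤ κ) (hτ : 0 < τ) :
    eLpNorm (fun x : ℝ => (1 - x) ^ (-κ)) ⊤ (volume.restrict (Icc 0 (1 - τ))) ≤
      ENNReal.ofReal (τ ^ (-κ)) := by
  rw [eLpNorm_exponent_top]
  refine eLpNormEssSup_le_of_ae_bound ((ae_restrict_mem measurableSet_Icc).mono fun x hx => ?_)
  have hx1 : τ ≤ 1 - x := by linarith [hx.2]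
  rw [Real.norm_of_nonneg (Real.rpow_nonneg (hτ.le.trans hx1) _)]
  exact Real.rpow_le_rpow_of_nonpos hτ hx1 (by linarith)

end PowerIntegrals

section Logarithm

variable {h δ : ℝ}

theorem half_le_abs_log (hδ : 0 < δ) (hδ1 : δ ≤ 1 / 2) : 1 / 2 ≤ |Real.log δ| := by
  have hlog : Real.log δ ≤ -Real.log 2 := by
    rw [← Real.log_inv, ← one_div]
    exact Real.log_le_log hδ hδ1
  rw [abs_of_neg (by linarith [Real.log_two_gt_d9])]
  linarith [Real.log_two_gt_d9]

theorem sq_mul_abs_log_le (hh : 0 < h) (hhδ : h ≤ δ) (hδ1 : δ ≤ 1 / 2) :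
    h ^ 2 * |Real.log h| ≤ 3 * (δ ^ 2 * |Real.log δ|) := by
  have hδ : 0 < δ := hh.trans_le hhδ
  have hratio : |Real.log h| ≤ |Real.log δ| + δ / h := by
    have hlog := Real.log_le_sub_one_of_pos (div_pos hδ hh)
    rw [Real.log_div hδ.ne' hh.ne'] at hlog
    rw [abs_of_neg (Real.log_neg hh (by linarith)), abs_of_neg (Real.log_neg hδ (by linarith))]
    linarith
  calc h ^ 2 * |Real.log h| ≤ h ^ 2 * (|Real.log δ| + δ / h) := by gcongr
    _ = h ^ 2 * |Real.log δ| + h * δ := by field_simp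
    _ ≤ δ ^ 2 * |Real.log δ| + δ * δ := by gcongr
    _ = δ ^ 2 * |Real.log δ| + 2 * (δ ^ 2 * (1 / 2)) := by ring
    _ ≤ δ ^ 2 * |Real.log δ| + 2 * (δ ^ 2 * |Real.log δ|) := by
        gcongr
        exact half_le_abs_log hδ hδ1
    _ = 3 * (δ ^ 2 * |Real.log δ|) := by ring

theorem neg_log_sq_mul_sq_div_four_le {κ : ℝ} (hκ : 1 ≤ κ) (hh : 0 < h) (hh1 : h ≤ 1 / 2) :
    -Real.log (κ ^ 2 * h ^ 2 / 4) ≤ 4 * |Real.log h| := by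
  have hmono : Real.log (h ^ 4) ≤ Real.log (κ ^ 2 * h ^ 2 / 4) := by
    refine Real.log_le_log (by positivity) ?_
    calc h ^ 4 = 1 ^ 2 * h ^ 2 * h ^ 2 := by ring
      _ ≤ κ ^ 2 * h ^ 2 * (1 / 2) ^ 2 := by gcongr
      _ = κ ^ 2 * h ^ 2 / 4 := by ring
  rw [Real.log_pow] at hmono
  rw [abs_of_neg (Real.log_neg hh (by linarith))]
  push_cast at hmono
  linarith

end Logarithm

section HolderConjugate

theorem one_le_toReal {q : ℝ≥0∞} (hq1 : 1 ≤ q) (hq : q ≠ ⊤) : 1 ≤ q.toReal := by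
  simpa only [ENNReal.toReal_one] using ENNReal.toReal_mono hq hq1

variable {p q : ℝ≥0∞} [ENNReal.HolderConjugate p q]

theorem toReal_inv_add_toReal_inv : p.toReal⁻¹ + q.toReal⁻¹ = 1 := by
  rw [← ENNReal.toReal_inv, ← ENNReal.toReal_inv,
    ← ENNReal.toReal_add (ENNReal.inv_ne_top.2 (ENNReal.HolderConjugate.ne_zero p q))
      (ENNReal.inv_ne_top.2 (ENNReal.HolderConjugate.ne_zero q p)),
    ENNReal.HolderConjugate.inv_add_inv_eq_one p q, ENNReal.toReal_one]

theorem two_sub_two_div_toReal : 2 - 2 / p.toReal = 2 / q.toReal := by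
  have hpq := toReal_inv_add_toReal_inv (p := p) (q := q)
  rw [div_eq_mul_inv, div_eq_mul_inv]
  linarith

theorem two_lt_iff_toReal_lt_two (hq : q ≠ ⊤) : 2 < p ↔ q.toReal < 2 := by
  have hqr : 0 < q.toReal := ENNReal.toReal_pos (ENNReal.HolderConjugate.ne_zero q p) hq
  have hpq := toReal_inv_add_toReal_inv (p := p) (q := q)
  rw [← ENNReal.inv_lt_inv, ← ENNReal.toReal_lt_toReal
    (ENNReal.inv_ne_top.2 (ENNReal.HolderConjugate.ne_zero p q)) (by simp), ENNReal.toReal_inv,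
    ENNReal.toReal_inv, ENNReal.toReal_ofNat, ← inv_lt_inv₀ two_pos hqr]
  constructor <;> intro h <;> linarith

theorem eq_two_iff_toReal_eq_two : p = 2 ↔ q.toReal = 2 := by
  have hpq := toReal_inv_add_toReal_inv (p := p) (q := q)
  rw [← inv_inj (a := p), ← ENNReal.toReal_eq_toReal_iff'
    (ENNReal.inv_ne_top.2 (ENNReal.HolderConjugate.ne_zero p q)) (by simp), ENNReal.toReal_inv,
    ENNReal.toReal_inv, ENNReal.toReal_ofNat, ← inv_inj (a := q.toReal)]
  constructor <;> intro h <;> linarith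

theorem eq_top_iff_toReal_eq_one : p = ⊤ ↔ q.toReal = 1 := by
  rw [ENNReal.HolderConjugate.eq_top_iff_eq_one p q, ENNReal.toReal_eq_one_iff]

end HolderConjugate

section Rate

variable {k : ℕ} {p q : ℝ≥0∞} {δ : ℝ}

theorem rateFn_one (k : ℕ) (δ : ℝ) : rateFn k 1 δ = 1 := by
  rw [rateFn, if_neg (by simp), if_neg (by simp), if_neg (by simp)]
  norm_num

variable [ENNReal.HolderConjugate p q]

theorem rateFn_of_mul_toReal_lt_two (hk : 1 ≤ k) (hq : q ≠ ⊤) (hkq : k * q.toReal < 2) (δ : ℝ) :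
    rateFn k p δ = δ ^ k := by
  have hqr : 1 ≤ q.toReal := one_le_toReal (ENNReal.HolderConjugate.one_le q p) hq
  obtain rfl : k = 1 := by
    have hk2 : (k : ℝ) < 2 := by nlinarith
    have : k < 2 := by exact_mod_cast hk2
    omega
  have hp : 2 < p := (two_lt_iff_toReal_lt_two (q := q) hq).2 (by simpa using hkq)
  rw [rateFn, if_neg (by simp), if_neg fun h => hp.ne' h.2, if_pos ⟨rfl, hp⟩, pow_one]

theorem rateFn_of_mul_toReal_eq_two (hk : 1 ≤ k) (hq : q ≠ ⊤) (hkq : k * q.toReal = 2)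
    (hδ : 0 ≤ δ) : rateFn k p δ = (δ ^ 2 * |Real.log δ|) ^ ((k : ℝ) / 2) := by
  have hqr : 1 ≤ q.toReal := one_le_toReal (ENNReal.HolderConjugate.one_le q p) hq
  obtain rfl | rfl : k = 1 ∨ k = 2 := by
    have hk2 : (k : ℝ) ≤ 2 := by nlinarith
    have : k ≤ 2 := by exact_mod_cast hk2
    omega
  · have hp : p = 2 := (eq_two_iff_toReal_eq_two (q := q)).2 (by simpa using hkq)
    rw [rateFn, if_neg (by simp), if_pos ⟨rfl, hp⟩, Nat.cast_one, ← Real.sqrt_eq_rpow,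
      Real.sqrt_mul (sq_nonneg δ), Real.sqrt_sq hδ]
  · have hp : p = ⊤ := (eq_top_iff_toReal_eq_one (q := q)).2 (by push_cast at hkq; linarith)
    rw [rateFn, if_pos ⟨rfl, hp⟩, Nat.cast_ofNat, div_self two_ne_zero, Real.rpow_one]

theorem rateFn_of_two_lt_mul_toReal (hq : q ≠ ⊤) (hkq : 2 < k * q.toReal) (δ : ℝ) :
    rateFn k p δ = δ ^ (2 / q.toReal) := by
  rw [rateFn, if_neg, if_neg, if_neg, two_sub_two_div_toReal (q := q)]
  · rintro ⟨rfl, hp⟩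
    rw [two_lt_iff_toReal_lt_two (q := q) hq] at hp
    push_cast at hkq
    linarith
  · rintro ⟨rfl, hp⟩
    rw [eq_two_iff_toReal_eq_two (q := q)] at hp
    push_cast at hkq
    linarith
  · rintro ⟨rfl, hp⟩
    rw [eq_top_iff_toReal_eq_one (q := q)] at hp
    push_cast at hkq
    linarith

theorem rpow_le_two_mul_rateFn (k : ℕ) (p : ℝ≥0∞) (hδ : 0 < δ) (hδ1 : δ ≤ 1 / 2) :
    δ ^ (2 - 2 / p.toReal) ≤ 2 * rateFn k p δ := by
  have hlog := half_le_abs_log hδ hδ1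
  have hnonneg : 0 ≤ δ ^ (2 - 2 / p.toReal) := by positivity
  unfold rateFn
  split_ifs with htop htwo hgt
  · rw [htop.2, ENNReal.toReal_top, div_zero, sub_zero, Real.rpow_two]
    nlinarith [sq_nonneg δ]
  · have hsqrt : 1 / 2 ≤ √|Real.log δ| := Real.le_sqrt_of_sq_le (by linarith)
    rw [htwo.2, ENNReal.toReal_ofNat, div_self two_ne_zero, show (2 : ℝ) - 1 = 1 by norm_num,
      Real.rpow_one]
    nlinarith
  · have hexp : 1 ≤ 2 - 2 / p.toReal := by
      rcases eq_or_ne p ⊤ with rfl | hp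
      · simp
      · have hp2 : 2 < p.toReal := by simpa using (ENNReal.toReal_lt_toReal (by simp) hp).2 hgt.2
        linarith [(div_le_one (by linarith)).2 hp2.le]
    have hle := Real.rpow_le_rpow_of_exponent_ge hδ (by linarith) hexp
    rw [Real.rpow_one] at hle
    linarith
  · linarith

end Rate

section WeightNorm

variable {k : ℕ} {r h δ : ℝ}

theorem pow_mul_integral_rpow_le_of_lt_two (hk : 1 ≤ k) (hr : 0 < r) (hkr : k * r < 2)
    (hh : 0 < h) (hhδ : h ≤ δ) (hτ1 : (k : ℝ) ^ 2 * h ^ 2 / 4 ≤ 1) :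
    h ^ k * (∫ s in ((k : ℝ) ^ 2 * h ^ 2 / 4)..1, s ^ (-((k : ℝ) / 2 * r))) ^ (1 / r) ≤
      (1 - (k : ℝ) / 2 * r)⁻¹ ^ (1 / r) * δ ^ k := by
  have : (0 : ℝ) < k := by exact_mod_cast hk
  have hτ : 0 < (k : ℝ) ^ 2 * h ^ 2 / 4 := by positivity
  rw [mul_comm]
  refine mul_le_mul ?_ (pow_le_pow_left₀ hh.le hhδ k) (by positivity)
    (Real.rpow_nonneg (inv_nonneg.2 (by linarith)) _)
  exact Real.rpow_le_rpow (integral_rpow_nonneg _ hτ hτ1)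
    (integral_rpow_neg_le_of_lt_one (by linarith) hτ) (by positivity)

theorem pow_mul_integral_rpow_le_of_eq_two (hk : 1 ≤ k) (hkr : k * r = 2)
    (hh : 0 < h) (hhδ : h ≤ δ) (hδ1 : δ ≤ 1 / 2) (hτ1 : (k : ℝ) ^ 2 * h ^ 2 / 4 ≤ 1) :
    h ^ k * (∫ s in ((k : ℝ) ^ 2 * h ^ 2 / 4)..1, s ^ (-((k : ℝ) / 2 * r))) ^ (1 / r) ≤
      12 ^ ((k : ℝ) / 2) * (δ ^ 2 * |Real.log δ|) ^ ((k : ℝ) / 2) := by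
  have hk1 : (1 : ℝ) ≤ k := by exact_mod_cast hk
  have hτ : 0 < (k : ℝ) ^ 2 * h ^ 2 / 4 := by positivity
  have hlog_nonneg : 0 ≤ -Real.log ((k : ℝ) ^ 2 * h ^ 2 / 4) := by
    linarith [Real.log_nonpos hτ.le hτ1]
  have hpow : h ^ k = (h ^ 2) ^ ((k : ℝ) / 2) := by
    rw [← sqrt_pow_eq_rpow (sq_nonneg h), Real.sqrt_sq hh.le]
  have hr : 1 / r = (k : ℝ) / 2 := by
    rw [← hkr, div_mul_cancel_left₀ (by positivity), one_div]
  rw [show (k : ℝ) / 2 * r = 1 by linarith, integral_rpow_neg_one hτ, hr, hpow,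
    ← Real.mul_rpow (sq_nonneg h) hlog_nonneg, ← Real.mul_rpow (by norm_num) (by positivity)]
  refine Real.rpow_le_rpow (by positivity) ?_ (by positivity)
  calc h ^ 2 * -Real.log ((k : ℝ) ^ 2 * h ^ 2 / 4) ≤ h ^ 2 * (4 * |Real.log h|) := by
        gcongr
        exact neg_log_sq_mul_sq_div_four_le hk1 hh (hhδ.trans hδ1)
    _ ≤ 12 * (δ ^ 2 * |Real.log δ|) := by linarith [sq_mul_abs_log_le hh hhδ hδ1]

theorem pow_mul_integral_rpow_le_of_two_lt (hk : 1 ≤ k) (hr : 0 < r) (hkr : 2 < k * r)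
    (hh : 0 < h) (hhδ : h ≤ δ) (hτ1 : (k : ℝ) ^ 2 * h ^ 2 / 4 ≤ 1) :
    h ^ k * (∫ s in ((k : ℝ) ^ 2 * h ^ 2 / 4)..1, s ^ (-((k : ℝ) / 2 * r))) ^ (1 / r) ≤
      (((k : ℝ) / 2 * r - 1)⁻¹ * ((k : ℝ) ^ 2 / 4) ^ (1 - (k : ℝ) / 2 * r)) ^ (1 / r) *
        δ ^ (2 / r) := by
  have : (0 : ℝ) < k := by exact_mod_cast hk
  have hτ : 0 < (k : ℝ) ^ 2 * h ^ 2 / 4 := by positivity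
  have hexponents : h ^ k * ((h ^ 2) ^ (1 - (k : ℝ) / 2 * r)) ^ (1 / r) = h ^ (2 / r) := by
    rw [← Real.rpow_natCast h 2, ← Real.rpow_natCast h k, ← Real.rpow_mul hh.le,
      ← Real.rpow_mul hh.le, ← Real.rpow_add hh]
    congr 1
    push_cast
    field_simp
    ring
  set a : ℝ := (k : ℝ) / 2 * r with ha_def
  have ha : 1 < a := by linarith
  have : 0 < (a - 1)⁻¹ := inv_pos.2 (by linarith)
  calc h ^ k * (∫ s in ((k : ℝ) ^ 2 * h ^ 2 / 4)..1, s ^ (-a)) ^ (1 / r)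
      ≤ h ^ k * ((a - 1)⁻¹ * ((k : ℝ) ^ 2 * h ^ 2 / 4) ^ (1 - a)) ^ (1 / r) := by
        gcongr
        · exact integral_rpow_nonneg _ hτ hτ1
        · exact integral_rpow_neg_le_of_one_lt ha hτ hτ1
    _ = ((a - 1)⁻¹ * ((k : ℝ) ^ 2 / 4) ^ (1 - a)) ^ (1 / r) *
          (h ^ k * ((h ^ 2) ^ (1 - a)) ^ (1 / r)) := by
        rw [mul_div_right_comm, Real.mul_rpow (y := h ^ 2) (by positivity) (by positivity),
          ← mul_assoc (a - 1)⁻¹, Real.mul_rpow (y := (h ^ 2) ^ (1 - a)) (by positivity)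
            (by positivity), mul_left_comm]
    _ = ((a - 1)⁻¹ * ((k : ℝ) ^ 2 / 4) ^ (1 - a)) ^ (1 / r) * h ^ (2 / r) := by rw [hexponents]
    _ ≤ ((a - 1)⁻¹ * ((k : ℝ) ^ 2 / 4) ^ (1 - a)) ^ (1 / r) * δ ^ (2 / r) := by gcongr

variable (p q : ℝ≥0∞) [ENNReal.HolderConjugate p q]

theorem exists_pow_mul_integral_rpow_le_rateFn (hk : 1 ≤ k) (hq : q ≠ ⊤) :
    ∃ C : ℝ, 0 < C ∧ ∀ h δ : ℝ, 0 < h → h ≤ δ → k * δ ≤ 1 / 2 →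
      h ^ k * (∫ s in ((k : ℝ) ^ 2 * h ^ 2 / 4)..1, s ^ (-((k : ℝ) / 2 * q.toReal))) ^
        (1 / q.toReal) ≤ C * rateFn k p δ := by
  have hk1 : (1 : ℝ) ≤ k := by exact_mod_cast hk
  have hr : 0 < q.toReal := ENNReal.toReal_pos (ENNReal.HolderConjugate.ne_zero q p) hq
  have hτ1 : ∀ h δ : ℝ, 0 < h → h ≤ δ → k * δ ≤ 1 / 2 → (k : ℝ) ^ 2 * h ^ 2 / 4 ≤ 1 := by
    intro h δ hh hhδ hδ
    have hkh : k * h ≤ 1 / 2 := (mul_le_mul_of_nonneg_left hhδ (by positivity)).trans hδ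
    have hkh0 : 0 ≤ k * h := by positivity
    nlinarith
  rcases lt_trichotomy (k * q.toReal) 2 with hlt | heq | hgt
  · refine ⟨(1 - (k : ℝ) / 2 * q.toReal)⁻¹ ^ (1 / q.toReal),
      Real.rpow_pos_of_pos (inv_pos.2 (by linarith)) _, fun h δ hh hhδ hδ => ?_⟩
    rw [rateFn_of_mul_toReal_lt_two (q := q) hk hq hlt]
    exact pow_mul_integral_rpow_le_of_lt_two hk hr hlt hh hhδ (hτ1 h δ hh hhδ hδ)
  · refine ⟨12 ^ ((k : ℝ) / 2), by positivity, fun h δ hh hhδ hδ => ?_⟩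
    rw [rateFn_of_mul_toReal_eq_two (q := q) hk hq heq (hh.le.trans hhδ)]
    exact pow_mul_integral_rpow_le_of_eq_two hk heq hh hhδ (by nlinarith) (hτ1 h δ hh hhδ hδ)
  · refine ⟨(((k : ℝ) / 2 * q.toReal - 1)⁻¹ *
      ((k : ℝ) ^ 2 / 4) ^ (1 - (k : ℝ) / 2 * q.toReal)) ^ (1 / q.toReal),
      Real.rpow_pos_of_pos (mul_pos (inv_pos.2 (by linarith)) (by positivity)) _,
      fun h δ hh hhδ hδ => ?_⟩
    rw [rateFn_of_two_lt_mul_toReal (q := q) hq hgt]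
    exact pow_mul_integral_rpow_le_of_two_lt hk hr hgt hh hhδ (hτ1 h δ hh hhδ hδ)

theorem pow_mul_rpow_neg_half_eq (hk : 1 ≤ k) (hh : 0 < h) :
    h ^ k * ((k : ℝ) ^ 2 * h ^ 2 / 4) ^ (-((k : ℝ) / 2)) = (2 / k) ^ k := by
  have : (0 : ℝ) < k := by exact_mod_cast hk
  have hsq : (k : ℝ) ^ 2 * h ^ 2 / 4 = (k * h / 2) ^ 2 := by ring
  rw [hsq, Real.rpow_neg (by positivity), ← sqrt_pow_eq_rpow (by positivity),
    Real.sqrt_sq (by positivity), ← div_eq_mul_inv, ← div_pow]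
  congr 1
  field_simp

theorem exists_pow_mul_eLpNorm_le_rateFn (hk : 1 ≤ k) :
    ∃ C : ℝ, 0 < C ∧ ∀ h δ : ℝ, 0 < h → h ≤ δ → k * δ ≤ 1 / 2 →
      ENNReal.ofReal (h ^ k) * eLpNorm (fun x : ℝ => (1 - x) ^ (-((k : ℝ) / 2))) q
        (volume.restrict (Icc 0 (1 - (k : ℝ) ^ 2 * h ^ 2 / 4))) ≤
          ENNReal.ofReal (C * rateFn k p δ) := by
  have hk0 : (0 : ℝ) < k := by exact_mod_cast hk
  rcases eq_or_ne q ⊤ with rfl | hq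
  · obtain rfl : p = 1 := (ENNReal.HolderConjugate.eq_top_iff_eq_one ⊤ p).1 rfl
    refine ⟨(2 / k) ^ k, by positivity, fun h δ hh _ _ => ?_⟩
    rw [rateFn_one, mul_one, ← pow_mul_rpow_neg_half_eq hk hh, ENNReal.ofReal_mul (by positivity)]
    gcongr
    exact eLpNorm_top_one_sub_rpow_le (by positivity) (by positivity)
  · obtain ⟨C, hC, hle⟩ := exists_pow_mul_integral_rpow_le_rateFn p q hk hq
    refine ⟨C, hC, fun h δ hh hhδ hδ => ?_⟩
    have hkh : k * h ≤ 1 / 2 := (mul_le_mul_of_nonneg_left hhδ hk0.le).trans hδ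
    have hkh0 : 0 ≤ k * h := by positivity
    rw [eLpNorm_one_sub_rpow _ (by positivity) (by nlinarith)
      (ENNReal.HolderConjugate.ne_zero q p) hq, ← ENNReal.ofReal_mul (by positivity)]
    exact ENNReal.ofReal_le_ofReal (hle h δ hh hhδ hδ)

end WeightNorm

section MainPart

variable {p : ℝ≥0∞} {β : ℝ} {f : ℝ → ℝ} {a b : ℝ}

theorem aestronglyMeasurable_jacobi_mul (hf : f ∈ WSet p β β) (ha : -1 ≤ a) (hb : b ≤ 1) :
    AEStronglyMeasurable (fun x => jacobi β β x * f x) (volume.restrict (Icc a b)) :=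
  ((measurable_jacobi β β).aemeasurable.mul (hf.1.mono_measure
    (Measure.restrict_mono (Icc_subset_Icc ha hb) le_rfl))).aestronglyMeasurable

theorem eLpNorm_restrict_le_LpOn (g : ℝ → ℝ) (p : ℝ≥0∞) (ha : -1 ≤ a) (hb : b ≤ 1) :
    eLpNorm g p (volume.restrict (Icc a b)) ≤ LpOn g p (-1) 1 :=
  eLpNorm_mono_measure _ (Measure.restrict_mono (Icc_subset_Icc ha hb) le_rfl)

theorem one_sub_rpow_mul_le_jacobi_mul {x y : ℝ} (β κ : ℝ) (hx : x ∈ Ico 0 1) :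
    (1 - x) ^ (β - κ) * y ≤ 2 ^ |β| * |(1 - x) ^ (-κ) * (jacobi β β x * y)| := by
  have hx0 : 0 < 1 + x := by linarith [hx.1]
  have hx1 : 0 < 1 - x := by linarith [hx.2]
  have hleft : 1 ≤ 2 ^ |β| * (1 + x) ^ β := by
    simpa only [Real.one_rpow] using
      rpow_le_of_comparable (b := 1) hx0 one_le_two (by linarith [hx.2]) (by linarith [hx.1]) β
  calc (1 - x) ^ (β - κ) * y = (1 - x) ^ (-κ) * (1 - x) ^ β * y := by
        rw [← Real.rpow_add hx1, neg_add_eq_sub]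
    _ ≤ 1 * ((1 - x) ^ (-κ) * (1 - x) ^ β * |y|) := by
        rw [one_mul]
        gcongr
        exact le_abs_self y
    _ ≤ 2 ^ |β| * (1 + x) ^ β * ((1 - x) ^ (-κ) * (1 - x) ^ β * |y|) := by gcongr
    _ = 2 ^ |β| * |(1 - x) ^ (-κ) * (jacobi β β x * y)| := by
        rw [abs_mul, abs_mul, abs_of_nonneg (jacobi_nonneg ⟨by linarith, hx.2.le⟩),
          abs_of_pos (Real.rpow_pos_of_pos hx1 _), jacobi]
        ring

theorem lintegral_one_sub_rpow_mul_le (q : ℝ≥0∞) [ENNReal.HolderConjugate p q]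
    (hf : f ∈ WSet p β β) (κ : ℝ) {τ : ℝ} (hτ : 0 < τ) :
    ∫⁻ x in Icc 0 (1 - τ), ENNReal.ofReal ((1 - x) ^ (β - κ) * f x) ≤
      ENNReal.ofReal (2 ^ |β|) *
        (eLpNorm (fun x : ℝ => (1 - x) ^ (-κ)) q (volume.restrict (Icc 0 (1 - τ))) *
          LpOn (fun x => jacobi β β x * f x) p (-1) 1) := by
  have hmeas : Measurable fun x : ℝ => (1 - x) ^ (-κ) := by fun_prop
  calc ∫⁻ x in Icc 0 (1 - τ), ENNReal.ofReal ((1 - x) ^ (β - κ) * f x)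
      ≤ ∫⁻ x in Icc 0 (1 - τ), ENNReal.ofReal (2 ^ |β|) *
          ‖((fun x : ℝ => (1 - x) ^ (-κ)) • fun x => jacobi β β x * f x) x‖ₑ := by
        refine setLIntegral_mono' measurableSet_Icc fun x hx => ?_
        rw [Real.enorm_eq_ofReal_abs, ← ENNReal.ofReal_mul (by positivity)]
        exact ENNReal.ofReal_le_ofReal
          (one_sub_rpow_mul_le_jacobi_mul β κ ⟨hx.1, by linarith [hx.2]⟩)
    _ = ENNReal.ofReal (2 ^ |β|) * eLpNorm
          ((fun x : ℝ => (1 - x) ^ (-κ)) • fun x => jacobi β β x * f x) 1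
          (volume.restrict (Icc 0 (1 - τ))) := by
        rw [lintegral_const_mul' _ _ ENNReal.ofReal_ne_top, eLpNorm_one_eq_lintegral_enorm]
    _ ≤ _ := by
        gcongr
        refine (eLpNorm_smul_le_mul_eLpNorm (p := q) (q := p) (r := 1)
          (aestronglyMeasurable_jacobi_mul hf (by norm_num) (by linarith))
          hmeas.aestronglyMeasurable).trans ?_
        gcongr
        exact eLpNorm_restrict_le_LpOn _ p (by norm_num) (by linarith)

theorem exists_OmegaMain_le (β : ℝ) {k : ℕ} (hk : 1 ≤ k) (hp : 1 ≤ p) :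
    ∃ C : ℝ, 0 < C ∧ ∀ f ∈ MPlus k ∩ WSet p β β, ∀ δ : ℝ, k * δ ≤ 1 / 2 →
      OmegaMain k f δ (jacobi β β) 1 ≤
        ENNReal.ofReal C * LpOn (fun x => jacobi β β x * f x) p (-1) 1 *
          ENNReal.ofReal (rateFn k p δ) := by
  have := ENNReal.HolderConjugate.conjExponent hp
  set q := ENNReal.conjExponent p
  obtain ⟨C₁, hC₁, hdiff⟩ := MPlus.exists_setLIntegral_symmDelta_le β hk
  obtain ⟨C₂, hC₂, hrate⟩ := exists_pow_mul_eLpNorm_le_rateFn p q hk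
  have : (0 : ℝ) < k := by exact_mod_cast hk
  refine ⟨C₁ * 2 ^ |β| * C₂, by positivity, fun f hf δ hδ => iSup₂_le fun h hh => ?_⟩
  have hh0 : 0 < h := hh.1
  have hholder := lintegral_one_sub_rpow_mul_le q hf.2 ((k : ℝ) / 2)
    (τ := (k : ℝ) ^ 2 * h ^ 2 / 4) (by positivity)
  set N := LpOn (fun x => jacobi β β x * f x) p (-1) 1
  set E := eLpNorm (fun x : ℝ => (1 - x) ^ (-((k : ℝ) / 2))) q
    (volume.restrict (Icc 0 (1 - (k : ℝ) ^ 2 * h ^ 2 / 4)))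
  rw [LpOn, eLpNorm_one_eq_lintegral_enorm]
  calc ∫⁻ x in mainInterval k h, ‖jacobi β β x * symmDelta k (h * phiW x) f x‖ₑ
      ≤ ENNReal.ofReal (C₁ * h ^ k) * (ENNReal.ofReal (2 ^ |β|) * (E * N)) :=
        (hdiff h hh0 f hf.1).trans (by gcongr)
    _ = ENNReal.ofReal C₁ * ENNReal.ofReal (2 ^ |β|) * N * (ENNReal.ofReal (h ^ k) * E) := by
        rw [ENNReal.ofReal_mul hC₁.le]
        ring
    _ ≤ ENNReal.ofReal C₁ * ENNReal.ofReal (2 ^ |β|) * N *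
          ENNReal.ofReal (C₂ * rateFn k p δ) := by
        gcongr
        exact hrate h δ hh0 hh.2 hδ
    _ = ENNReal.ofReal (C₁ * 2 ^ |β| * C₂) * N * ENNReal.ofReal (rateFn k p δ) := by
        rw [ENNReal.ofReal_mul hC₂.le, ENNReal.ofReal_mul (p := C₁ * 2 ^ |β|) (by positivity),
          ENNReal.ofReal_mul hC₁.le]
        ring

end MainPart

section Endpoints

variable {k : ℕ} {p : ℝ≥0∞} {β h x a b δ : ℝ} {f : ℝ → ℝ}

theorem abs_symmDelta_le {η M : ℝ} (hη : 0 ≤ η) (hM : 0 ≤ M)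
    (hf : -1 ≤ x - k * η / 2 → x + k * η / 2 ≤ 1 →
      ∀ y ∈ Icc (x - k * η / 2) (x + k * η / 2), |f y| ≤ M) :
    |symmDelta k η f x| ≤ 2 ^ k * M := by
  unfold symmDelta
  split_ifs with hmem
  · have hterm : ∀ i ∈ Finset.range (k + 1),
        |(k.choose i : ℝ) * (-1 : ℝ) ^ (k - i) * f (x - k * η / 2 + i * η)| ≤
          (k.choose i : ℝ) * M := by
      intro i hi
      have hik : (i : ℝ) * η ≤ k * η := by
        gcongr
        exact Finset.mem_range_succ_iff.1 hi
      have hi0 : 0 ≤ (i : ℝ) * η := by positivity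
      rw [abs_mul, abs_mul, abs_pow, abs_neg, abs_one, one_pow, mul_one, Nat.abs_cast]
      gcongr
      exact hf hmem.1.1 hmem.2.2 _ ⟨by linarith, by linarith⟩
    calc _ ≤ ∑ i ∈ Finset.range (k + 1), (k.choose i : ℝ) * M :=
          (Finset.abs_sum_le_sum_abs _ _).trans (Finset.sum_le_sum hterm)
      _ = 2 ^ k * M := by
          rw [← Finset.sum_mul]
          exact_mod_cast congrArg (fun m : ℕ => (m : ℝ) * M) (Nat.sum_range_choose k)
  · rw [abs_zero]
    positivity

theorem one_sub_one_div_toReal_nonneg (hp : 1 ≤ p) : 0 ≤ 1 - 1 / p.toReal := by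
  rcases eq_or_ne p ⊤ with rfl | hp_top
  · simp
  · have hp1 : 1 ≤ p.toReal := one_le_toReal hp hp_top
    rw [sub_nonneg, div_le_one (by linarith)]
    exact hp1

theorem setLIntegral_jacobi_mul_le (hp : 1 ≤ p) (hf : f ∈ WSet p β β) (ha : -1 ≤ a)
    (hb : b ≤ 1) :
    ∫⁻ x in Icc a b, ‖jacobi β β x * f x‖ₑ ≤
      LpOn (fun x => jacobi β β x * f x) p (-1) 1 *
        ENNReal.ofReal (b - a) ^ (1 - 1 / p.toReal) := by
  have hholder := eLpNorm_le_eLpNorm_mul_rpow_measure_univ hp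
    (aestronglyMeasurable_jacobi_mul hf ha hb)
  rw [eLpNorm_one_eq_lintegral_enorm, Measure.restrict_apply_univ, Real.volume_Icc,
    ENNReal.toReal_one, div_one] at hholder
  refine hholder.trans ?_
  gcongr
  exact eLpNorm_restrict_le_LpOn _ p ha hb

theorem MPlus.abs_symmDelta_backward_le (hk : 1 ≤ k) (hf : f ∈ MPlus k) (hh : 0 ≤ h)
    (hx : x ∈ Ioo (-1) 1) (hxh : x ≠ -1 + k * h) :
    |symmDelta k h f (x - k * h / 2)| ≤ 2 ^ k * f x := by
  refine abs_symmDelta_le hh (MPlus.nonneg hk hf hx) fun hleft _ y hy => ?_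
  have hstrict : -1 < x - k * h :=
    lt_of_le_of_ne (by linarith) fun h => hxh (by linarith)
  have hyx : y ≤ x := by linarith [hy.2]
  have hy' : y ∈ Ioo (-1) 1 := ⟨by linarith [hy.1], hyx.trans_lt hx.2⟩
  rw [abs_of_nonneg (MPlus.nonneg hk hf hy')]
  exact MPlus.monotoneOn hk hf hy' hx hyx

theorem MPlus.setLIntegral_symmDelta_backward_le (β : ℝ) (hk : 1 ≤ k) (hf : f ∈ MPlus k)
    (hh : 0 ≤ h) (ha : -1 < a) :
    ∫⁻ x in Icc a 1, ‖jacobi β β x * symmDelta k h f (x - k * h / 2)‖ₑ ≤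
      ENNReal.ofReal (2 ^ k) * ∫⁻ x in Icc a 1, ‖jacobi β β x * f x‖ₑ := by
  rw [← lintegral_const_mul' _ _ ENNReal.ofReal_ne_top]
  refine lintegral_mono_ae ?_
  filter_upwards [ae_restrict_mem measurableSet_Icc,
    ae_restrict_of_ae (Measure.ae_ne volume (1 : ℝ)),
    ae_restrict_of_ae (Measure.ae_ne volume (-1 + k * h))] with x hx hx1 hxh
  have hx' : x ∈ Ioo (-1) 1 := ⟨ha.trans_le hx.1, lt_of_le_of_ne hx.2 hx1⟩
  rw [enorm_mul, enorm_mul, mul_left_comm, Real.enorm_eq_ofReal_abs (symmDelta _ _ _ _),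
    Real.enorm_eq_ofReal (MPlus.nonneg hk hf hx'), ← ENNReal.ofReal_mul (by positivity)]
  gcongr
  exact MPlus.abs_symmDelta_backward_le hk hf hh hx' hxh

theorem rpow_le_mul_rateFn {c : ℝ} (hc : 0 ≤ c) (k : ℕ) (p : ℝ≥0∞) (hδ : 0 < δ)
    (hδ1 : δ ≤ 1 / 2) :
    (c * δ ^ 2) ^ (1 - 1 / p.toReal) ≤ c ^ (1 - 1 / p.toReal) * (2 * rateFn k p δ) := by
  have hexp : (δ ^ 2) ^ (1 - 1 / p.toReal) = δ ^ (2 - 2 / p.toReal) := by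
    rw [← Real.rpow_natCast δ 2, ← Real.rpow_mul hδ.le]
    congr 1
    push_cast
    ring
  rw [Real.mul_rpow hc (sq_nonneg δ), hexp]
  gcongr
  exact rpow_le_two_mul_rateFn k p hδ hδ1

theorem two_mul_sq_mul_sq_le_half {κ : ℝ} (hκδ : 0 ≤ κ * δ) (hκδ1 : κ * δ ≤ 1 / 2) :
    2 * κ ^ 2 * δ ^ 2 ≤ 1 / 2 := by
  nlinarith

theorem exists_OmegaBwd_le (β : ℝ) (hk : 1 ≤ k) (hp : 1 ≤ p) :
    ∃ C : ℝ, 0 < C ∧ ∀ f ∈ MPlus k ∩ WSet p β β, ∀ δ : ℝ, 0 < δ → k * δ ≤ 1 / 2 →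
      OmegaBwd k f δ (jacobi β β) 1 ≤
        ENNReal.ofReal C * LpOn (fun x => jacobi β β x * f x) p (-1) 1 *
          ENNReal.ofReal (rateFn k p δ) := by
  have hk1 : (1 : ℝ) ≤ k := by exact_mod_cast hk
  set e : ℝ := 1 - 1 / p.toReal
  refine ⟨2 ^ k * (2 * (k : ℝ) ^ 2) ^ e * 2, by positivity,
    fun f hf δ hδ hkδ => iSup₂_le fun h hh => ?_⟩
  have hlength : 2 * (k : ℝ) ^ 2 * δ ^ 2 ≤ 1 / 2 := two_mul_sq_mul_sq_le_half (by positivity) hkδ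
  have hholder := setLIntegral_jacobi_mul_le hp hf.2
    (by linarith : -1 ≤ 1 - 2 * (k : ℝ) ^ 2 * δ ^ 2) le_rfl
  rw [sub_sub_cancel] at hholder
  set N := LpOn (fun x => jacobi β β x * f x) p (-1) 1
  rw [LpOn, eLpNorm_one_eq_lintegral_enorm]
  calc _ ≤ ENNReal.ofReal (2 ^ k) *
        ∫⁻ x in Icc (1 - 2 * (k : ℝ) ^ 2 * δ ^ 2) 1, ‖jacobi β β x * f x‖ₑ :=
        MPlus.setLIntegral_symmDelta_backward_le β hk hf.1 hh.1.le (by linarith)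
    _ ≤ ENNReal.ofReal (2 ^ k) * (N * ENNReal.ofReal ((2 * (k : ℝ) ^ 2 * δ ^ 2) ^ e)) := by
        rw [← ENNReal.ofReal_rpow_of_nonneg (by positivity) (one_sub_one_div_toReal_nonneg hp)]
        gcongr
    _ ≤ ENNReal.ofReal (2 ^ k) *
          (N * ENNReal.ofReal ((2 * (k : ℝ) ^ 2) ^ e * (2 * rateFn k p δ))) := by
        gcongr
        exact rpow_le_mul_rateFn (by positivity) k p hδ (by nlinarith)
    _ = _ := by
        rw [ENNReal.ofReal_mul (by positivity), ENNReal.ofReal_mul (by positivity),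
          ENNReal.ofReal_mul (by positivity), ENNReal.ofReal_mul (by positivity)]
        ring

theorem setLIntegral_jacobi_neg (α β a b : ℝ) :
    ∫⁻ x in Icc (-b) (-a), ‖jacobi α β x‖ₑ = ∫⁻ x in Icc a b, ‖jacobi β α x‖ₑ := by
  rw [← (Measure.measurePreserving_neg (volume : Measure ℝ)).setLIntegral_comp_preimage
    measurableSet_Icc (measurable_jacobi β α).enorm, neg_preimage, neg_Icc]
  refine lintegral_congr fun x => ?_
  rw [jacobi, jacobi, mul_comm, sub_neg_eq_add, ← sub_eq_add_neg]

theorem setLIntegral_jacobi_ne_top (α β : ℝ) (ha : -1 < a) (hb : b < 1) :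
    ∫⁻ x in Icc a b, ‖jacobi α β x‖ₑ ≠ ⊤ := by
  have hcont : ContinuousOn (jacobi α β) (Icc a b) := by
    unfold jacobi
    refine ContinuousOn.mul (ContinuousOn.rpow_const (by fun_prop) fun x hx => Or.inl ?_)
      (ContinuousOn.rpow_const (by fun_prop) fun x hx => Or.inl ?_)
    · exact (by linarith [hx.1] : 0 < 1 + x).ne'
    · exact (by linarith [hx.2] : 0 < 1 - x).ne'
  exact (hcont.integrableOn_compact isCompact_Icc).hasFiniteIntegral.ne

theorem setLIntegral_jacobi_ne_zero (α β : ℝ) (hb : b ∈ Ico (-1) 1) :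
    ∫⁻ x in Icc b 1, ‖jacobi α β x‖ₑ ≠ 0 := by
  have hpos : 0 < ∫⁻ x in Ioo b 1, ‖jacobi α β x‖ₑ := by
    rw [setLIntegral_pos_iff (measurable_jacobi α β).enorm]
    have hsub : Ioo b 1 ⊆ (Function.support fun x => ‖jacobi α β x‖ₑ) ∩ Ioo b 1 := by
      refine fun x hx => ⟨?_, hx⟩
      have hleft : 0 < 1 + x := by linarith [hb.1, hx.1]
      have hright : 0 < 1 - x := by linarith [hx.2]
      exact enorm_ne_zero.2 (by unfold jacobi; positivity)
    refine lt_of_lt_of_le ?_ (measure_mono hsub)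
    rw [Real.volume_Ioo, ENNReal.ofReal_pos]
    linarith [hb.2]
  exact (hpos.trans_le (lintegral_mono_set Ioo_subset_Icc_self)).ne'

-- Both integrals may be infinite, namely for `β ≤ -1`.
theorem exists_setLIntegral_jacobi_le (β : ℝ) (hb : 1 / 2 ≤ b) (hb1 : b < 1) :
    ∃ c : ℝ, 0 < c ∧ ∫⁻ x in Icc (-1) (-(1 / 2)), ‖jacobi β β x‖ₑ ≤
      ENNReal.ofReal c * ∫⁻ x in Icc b 1, ‖jacobi β β x‖ₑ := by
  have hsplit : ∫⁻ x in Icc (-1) (-(1 / 2)), ‖jacobi β β x‖ₑ ≤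
      (∫⁻ x in Icc (1 / 2) b, ‖jacobi β β x‖ₑ) + ∫⁻ x in Icc b 1, ‖jacobi β β x‖ₑ := by
    rw [setLIntegral_jacobi_neg, ← Icc_union_Icc_eq_Icc hb hb1.le]
    exact lintegral_union_le _ _ _
  have hmid : ∫⁻ x in Icc (1 / 2) b, ‖jacobi β β x‖ₑ ≠ ⊤ :=
    setLIntegral_jacobi_ne_top β β (by norm_num) hb1
  have htail : ∫⁻ x in Icc b 1, ‖jacobi β β x‖ₑ ≠ 0 :=
    setLIntegral_jacobi_ne_zero β β ⟨by linarith, hb1⟩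
  set B := ∫⁻ x in Icc (1 / 2) b, ‖jacobi β β x‖ₑ
  set A := ∫⁻ x in Icc b 1, ‖jacobi β β x‖ₑ
  rcases eq_or_ne A ⊤ with hA | hA
  · exact ⟨1, one_pos, by simp [hA]⟩
  · refine ⟨(B / A).toReal + 1, by positivity, hsplit.trans_eq ?_⟩
    rw [ENNReal.ofReal_add (by positivity) one_pos.le, ENNReal.ofReal_toReal
      (ENNReal.div_ne_top hmid htail), ENNReal.ofReal_one, add_mul, one_mul,
      ENNReal.div_mul_cancel htail hA]

theorem MPlus.abs_symmDelta_forward_le (hk : 1 ≤ k) (hf : f ∈ MPlus k) (hh : 0 ≤ h)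
    (hx : -1 < x) (hb : b ∈ Ioo (-1) 1) (hxb : x + k * h ≤ b) :
    |symmDelta k h f (x + k * h / 2)| ≤ 2 ^ k * f b := by
  refine abs_symmDelta_le hh (MPlus.nonneg hk hf hb) fun _ _ y hy => ?_
  have hyb : y ≤ b := by linarith [hy.2]
  have hy' : y ∈ Ioo (-1) 1 := ⟨by linarith [hy.1], hyb.trans_lt hb.2⟩
  rw [abs_of_nonneg (MPlus.nonneg hk hf hy')]
  exact MPlus.monotoneOn hk hf hy' hb hyb

theorem MPlus.setLIntegral_symmDelta_forward_le (β : ℝ) (hk : 1 ≤ k) (hf : f ∈ MPlus k)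
    (hh : 0 ≤ h) (hb : b ∈ Ioo (-1) 1) (hab : a + k * h ≤ b) :
    ∫⁻ x in Icc (-1) a, ‖jacobi β β x * symmDelta k h f (x + k * h / 2)‖ₑ ≤
      ENNReal.ofReal (2 ^ k * f b) * ∫⁻ x in Icc (-1) a, ‖jacobi β β x‖ₑ := by
  rw [← lintegral_const_mul' _ _ ENNReal.ofReal_ne_top]
  refine lintegral_mono_ae ?_
  filter_upwards [ae_restrict_mem measurableSet_Icc,
    ae_restrict_of_ae (Measure.ae_ne volume (-1 : ℝ))] with x hx hx1
  rw [enorm_mul, mul_comm, Real.enorm_eq_ofReal_abs (symmDelta _ _ _ _)]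
  gcongr
  exact MPlus.abs_symmDelta_forward_le hk hf hh (lt_of_le_of_ne hx.1 (Ne.symm hx1)) hb
    (by linarith [hx.2])

theorem MPlus.ofReal_mul_setLIntegral_jacobi_le (hk : 1 ≤ k) (hp : 1 ≤ p)
    (hf : f ∈ MPlus k ∩ WSet p β β) (hb : b ∈ Ico 0 1) :
    ENNReal.ofReal (f b) * ∫⁻ x in Icc b 1, ‖jacobi β β x‖ₑ ≤
      LpOn (fun x => jacobi β β x * f x) p (-1) 1 := by
  have hb' : b ∈ Ioo (-1 : ℝ) 1 := ⟨by linarith [hb.1], hb.2⟩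
  have hmono : ∀ᵐ x ∂(volume.restrict (Icc b 1)),
      ENNReal.ofReal (f b) * ‖jacobi β β x‖ₑ ≤ ‖jacobi β β x * f x‖ₑ := by
    filter_upwards [ae_restrict_mem measurableSet_Icc,
      ae_restrict_of_ae (Measure.ae_ne volume (1 : ℝ))] with x hx hx1
    have hx' : x ∈ Ioo (-1) 1 := ⟨hb'.1.trans_le hx.1, lt_of_le_of_ne hx.2 hx1⟩
    rw [enorm_mul, mul_comm, Real.enorm_eq_ofReal (MPlus.nonneg hk hf.1 hx')]
    gcongr
    exact MPlus.monotoneOn hk hf.1 hb' hx' hx.1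
  have hlength : ENNReal.ofReal (1 - b) ^ (1 - 1 / p.toReal) ≤ 1 :=
    ENNReal.rpow_le_one (ENNReal.ofReal_le_one.2 (by linarith [hb.1]))
      (one_sub_one_div_toReal_nonneg hp)
  rw [← lintegral_const_mul' _ _ ENNReal.ofReal_ne_top]
  exact (lintegral_mono_ae hmono).trans ((setLIntegral_jacobi_mul_le hp hf.2 hb'.1.le le_rfl).trans
    (mul_le_of_le_one_right zero_le hlength))

theorem one_le_mul_rateFn {c : ℝ} (k : ℕ) (p : ℝ≥0∞) (hδ : 0 < δ) (hδ1 : δ ≤ 1 / 2)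
    (hcδ : 1 ≤ c * δ ^ 2) : 1 ≤ 2 * c * rateFn k p δ := by
  have hc : 0 < c := pos_of_mul_pos_left (one_pos.trans_le hcδ) (sq_nonneg δ)
  have hexp : 2 - 2 / p.toReal ≤ (2 : ℝ) := sub_le_self 2 (by positivity)
  calc 1 ≤ c * δ ^ (2 : ℝ) := by rwa [Real.rpow_two]
    _ ≤ c * δ ^ (2 - 2 / p.toReal) := by
        gcongr ?_ * ?_
        exact Real.rpow_le_rpow_of_exponent_ge hδ (by linarith) hexp
    _ ≤ c * (2 * rateFn k p δ) := by
        gcongr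
        exact rpow_le_two_mul_rateFn k p hδ hδ1
    _ = 2 * c * rateFn k p δ := by ring

theorem MPlus.exists_setLIntegral_symmDelta_forward_le (β : ℝ) (hk : 1 ≤ k) (hp : 1 ≤ p)
    (hb : 1 / 2 ≤ b) (hb1 : b < 1) :
    ∃ C : ℝ, 0 < C ∧ ∀ f ∈ MPlus k ∩ WSet p β β, ∀ a ≤ -(1 / 2), ∀ h ≥ 0, a + k * h ≤ b →
      ∫⁻ x in Icc (-1) a, ‖jacobi β β x * symmDelta k h f (x + k * h / 2)‖ₑ ≤
        ENNReal.ofReal C * LpOn (fun x => jacobi β β x * f x) p (-1) 1 := by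
  obtain ⟨c, hc, hweight⟩ := exists_setLIntegral_jacobi_le β hb hb1
  refine ⟨2 ^ k * c, by positivity, fun f hf a ha h hh hab => ?_⟩
  calc _ ≤ ENNReal.ofReal (2 ^ k * f b) * ∫⁻ x in Icc (-1) a, ‖jacobi β β x‖ₑ :=
        MPlus.setLIntegral_symmDelta_forward_le β hk hf.1 hh ⟨by linarith, hb1⟩ hab
    _ ≤ ENNReal.ofReal (2 ^ k * f b) *
          (ENNReal.ofReal c * ∫⁻ x in Icc b 1, ‖jacobi β β x‖ₑ) := by
        gcongr
        exact (lintegral_mono_set (Icc_subset_Icc_right ha)).trans hweight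
    _ = ENNReal.ofReal (2 ^ k * c) *
          (ENNReal.ofReal (f b) * ∫⁻ x in Icc b 1, ‖jacobi β β x‖ₑ) := by
        rw [ENNReal.ofReal_mul (by positivity), ENNReal.ofReal_mul (by positivity)]
        ring
    _ ≤ _ := by
        gcongr
        exact MPlus.ofReal_mul_setLIntegral_jacobi_le hk hp hf ⟨by linarith, hb1⟩

theorem exists_OmegaFwd_le (β : ℝ) (hk : 1 ≤ k) (hp : 1 ≤ p) {δ₀ : ℝ} (hδ₀ : k * δ₀ ≤ 1 / 2)
    (hδ₀' : (k : ℝ) ^ 2 * (k + 1) * δ₀ ^ 2 < 1) :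
    ∃ C : ℝ, 0 < C ∧ ∀ f ∈ MPlus k ∩ WSet p β β, ∀ δ : ℝ, 0 < δ → δ ≤ δ₀ →
      OmegaFwd k f δ (jacobi β β) 1 ≤
        ENNReal.ofReal C * LpOn (fun x => jacobi β β x * f x) p (-1) 1 *
          ENNReal.ofReal (rateFn k p δ) := by
  have : (1 : ℝ) ≤ k := by exact_mod_cast hk
  set b : ℝ := max (1 / 2) (-1 + 2 * ((k : ℝ) ^ 2 * (k + 1) * δ₀ ^ 2))
  obtain ⟨C, hC, hlarge⟩ := MPlus.exists_setLIntegral_symmDelta_forward_le β hk hp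
    (le_max_left _ _ : 1 / 2 ≤ b) (max_lt (by norm_num) (by linarith))
  set c : ℝ := 2 * (k : ℝ) ^ 2 * (k + 1) with hc_def
  refine ⟨C * (2 * c), by positivity, fun f hf δ hδ hδδ₀ => iSup₂_le fun h hh => ?_⟩
  have hkδ : k * δ ≤ 1 / 2 := (mul_le_mul_of_nonneg_left hδδ₀ (by positivity)).trans hδ₀
  have hlength : 2 * (k : ℝ) ^ 2 * δ ^ 2 ≤ 1 / 2 := two_mul_sq_mul_sq_le_half (by positivity) hkδ
  have hreach : -1 + 2 * (k : ℝ) ^ 2 * δ ^ 2 + k * h ≤ -1 + c * δ ^ 2 := by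
    have hkh : k * h ≤ k * (2 * (k : ℝ) ^ 2 * δ ^ 2) := by gcongr; exact hh.2
    linarith
  rw [LpOn, eLpNorm_one_eq_lintegral_enorm]
  rcases le_or_gt (c * δ ^ 2) 1 with hcδ | hcδ
  · have hzero := MPlus.setLIntegral_symmDelta_forward_le β hk hf.1 hh.1.le
      (b := 0) (by norm_num) (hreach.trans (by linarith))
    rw [hf.1.2 0 (by norm_num) le_rfl, mul_zero, ENNReal.ofReal_zero, zero_mul] at hzero
    exact hzero.trans zero_le
  · have hreach_b : -1 + c * δ ^ 2 ≤ b := by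
      refine le_trans ?_ (le_max_right _ _)
      rw [hc_def, mul_assoc 2, mul_assoc 2]
      gcongr
    rw [ENNReal.ofReal_mul hC.le, mul_right_comm (ENNReal.ofReal C),
      mul_assoc (ENNReal.ofReal C * LpOn _ _ _ _),
      ← ENNReal.ofReal_mul (by positivity)]
    refine (hlarge f hf _ (by linarith) h hh.1.le (hreach.trans hreach_b)).trans
      (le_mul_of_one_le_right zero_le ?_)
    exact ENNReal.one_le_ofReal.2 (one_le_mul_rateFn k p hδ (by nlinarith) hcδ.le)

end Endpoints

theorem sq_mul_add_one_mul_sq_lt_one {κ δ : ℝ} (hκ : 0 < κ) (hδ : 0 ≤ δ)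
    (hδκ : δ < 1 / (κ * √(κ + 1))) : κ ^ 2 * (κ + 1) * δ ^ 2 < 1 := by
  rw [lt_div_iff₀ (by positivity)] at hδκ
  calc κ ^ 2 * (κ + 1) * δ ^ 2 = (δ * (κ * √(κ + 1))) ^ 2 := by
        rw [mul_pow, mul_pow, Real.sq_sqrt (by positivity)]
        ring
    _ < 1 := (sq_lt_one_iff₀ (by positivity)).2 hδκ

theorem statement12 (k : ℕ) (hk : 1 ≤ k) (β : ℝ) (p : ℝ≥0∞) (hp : 1 ≤ p)
    (δ₀ : ℝ) (hδ₀ : δ₀ ≤ 1 / (2 * (k : ℝ))) (hδ₀' : δ₀ < 1 / ((k : ℝ) * Real.sqrt (k + 1))) :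
    ∃ c : ℝ, 0 < c ∧ ∀ f : ℝ → ℝ, f ∈ MPlus k ∩ WSet p β β →
      ∀ δ : ℝ, 0 < δ → δ ≤ δ₀ →
        omegaDT k f δ (jacobi β β) 1 ≤
          ENNReal.ofReal c * LpOn (fun x => jacobi β β x * f x) p (-1) 1 *
            ENNReal.ofReal (rateFn k p δ) := by
  rcases le_or_gt δ₀ 0 with hneg | hpos
  · exact ⟨1, one_pos, fun f _ δ hδ hδδ₀ => absurd (hδ.trans_le hδδ₀) hneg.not_gt⟩
  have hk0 : (0 : ℝ) < k := by exact_mod_cast hk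
  have hkδ₀ : k * δ₀ ≤ 1 / 2 := by
    rw [le_div_iff₀ (by positivity)] at hδ₀
    linarith
  obtain ⟨C₁, hC₁, hmain⟩ := exists_OmegaMain_le β hk hp
  obtain ⟨C₂, hC₂, hfwd⟩ := exists_OmegaFwd_le β hk hp hkδ₀
    (sq_mul_add_one_mul_sq_lt_one hk0 hpos.le hδ₀')
  obtain ⟨C₃, hC₃, hbwd⟩ := exists_OmegaBwd_le β hk hp
  refine ⟨C₁ + C₂ + C₃, by positivity, fun f hf δ hδ hδδ₀ => ?_⟩
  have hkδ : k * δ ≤ 1 / 2 := (mul_le_mul_of_nonneg_left hδδ₀ hk0.le).trans hkδ₀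
  rw [omegaDT, ENNReal.ofReal_add (by positivity) hC₃.le, ENNReal.ofReal_add hC₁.le hC₂.le,
    add_mul, add_mul, add_mul, add_mul]
  exact add_le_add (add_le_add (hmain f hf δ hkδ) (hfwd f hf δ hδ hδδ₀)) (hbwd f hf δ hδ hkδ)
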